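/- arXiv:1009.2935 — 3 statements merged into one kernel-verified Lean document; each statement's English description precedes it below -/
import Mathlib

section
/- Let χ_{k,n} denote the Euler characteristic of D_k(Δ^n). Then the two-variable exponential generating function satisfies Σ_{k,n} χ_{k,n−1} (x^k/k!)(y^n/n!) = e^{x + y − x e^{−y}} (as an identity of formal power series, equivalently of real-analytic functions of x and y). -/
/-!
A family of pairwise disjoint subsets `S j ⊆ [N]`, `j ∈ [k]`, is the same thing as a function
`f : [N] → Option [k]`, with `S j = f⁻¹(some j)`. A cell of dimension `i` has sign
`(-1)^i = (-1)^k ∏ v, w (f v)`, where `w none = 1` and `w (some j) = -1`, and nonemptiness of all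
parts says that `f` hits every `some j`. Inclusion-exclusion over the set of values that `f` is
allowed to take gives the closed formula
`χ = ∑_{U ⊆ [k]} (-1)^|U| (1 - |U|)^N` (`eulerCharV_eq`).
For fixed `k` its exponential generating function in `y` is
`∑_U (-1)^|U| e^{(1 - |U|) y} = e^y (1 - e^{-y})^k`, and summing against `x^k / k!` yields
`e^y e^{x (1 - e^{-y})}`.
-/

open scoped BigOperators

/-- The number of `i`-dimensional cells of the discretized configuration space of `k`
points on the simplex with `N` vertices: the number of ordered partial partitions of
`[N]` with exactly `k` parts using exactly `k + i` elements in total. -/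
noncomputable def cellCount (k N i : ℕ) : ℕ :=
  Nat.card {S : Fin k → Finset (Fin N) //
    (∀ j, S j ≠ ∅) ∧ (∀ a b : Fin k, a ≠ b → Disjoint (S a) (S b)) ∧
      ∑ j, (S j).card = k + i}

/-- The Euler characteristic of the discretized configuration space of `k` points on the
simplex with `N` vertices (i.e. of `D_k(Δ^(N-1))`): the alternating sum of the numbers of
`i`-dimensional cells. -/
noncomputable def eulerCharV (k N : ℕ) : ℤ :=
  ∑ i ∈ Finset.range (N + 1), (-1 : ℤ) ^ i * cellCount k N i

/-- The sign carried by a vertex: `1` if it is unused, `-1` if it lies in some part. -/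
def vertexSign {k : ℕ} (o : Option (Fin k)) : ℤ := o.elim 1 (fun _ => -1)

/-- The part of index `j` cut out by an assignment of vertices to parts. -/
def fiberPart {k N : ℕ} (f : Fin N → Option (Fin k)) (j : Fin k) : Finset (Fin N) :=
  Finset.univ.filter fun v => f v = some j

lemma fiberPart_injective {k N : ℕ} :
    Function.Injective (fiberPart : (Fin N → Option (Fin k)) → Fin k → Finset (Fin N)) := by
  intro f g h
  funext v
  ext j
  have := congrArg (fun s => v ∈ s) (congrFun h j)
  simpa [fiberPart] using this

lemma disjoint_fiberPart {k N : ℕ} (f : Fin N → Option (Fin k)) (a b : Fin k) (hab : a ≠ b) :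
    Disjoint (fiberPart f a) (fiberPart f b) := by
  rw [Finset.disjoint_left]
  intro v ha hb
  simp only [fiberPart, Finset.mem_filter, Finset.mem_univ, true_and] at ha hb
  exact hab (Option.some.inj (ha.symm.trans hb))

lemma exists_fiberPart_eq {k N : ℕ} (S : Fin k → Finset (Fin N))
    (hS : ∀ a b : Fin k, a ≠ b → Disjoint (S a) (S b)) : ∃ f, fiberPart f = S := by
  classical
  refine ⟨fun v => if h : ∃ j, v ∈ S j then some h.choose else none, ?_⟩
  funext j
  ext v
  simp only [fiberPart, Finset.mem_filter, Finset.mem_univ, true_and]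
  constructor
  · intro h
    split_ifs at h with h'
    exact Option.some.inj h ▸ h'.choose_spec
  · intro h
    have h' : ∃ j, v ∈ S j := ⟨j, h⟩
    rw [dif_pos h']
    congr 1
    by_contra hne
    exact Finset.disjoint_left.1 (hS _ _ hne) h'.choose_spec h

lemma fiberPart_ne_empty_iff {k N : ℕ} (f : Fin N → Option (Fin k)) (j : Fin k) :
    fiberPart f j ≠ ∅ ↔ ∃ v, f v = some j := by
  simp [fiberPart, Finset.filter_eq_empty_iff]

lemma prod_vertexSign {k N : ℕ} (f : Fin N → Option (Fin k)) :
    ∏ v, vertexSign (f v) = (-1) ^ ∑ j, (fiberPart f j).card := by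
  have h (o : Option (Fin k)) : vertexSign o = ∏ j, if o = some j then (-1 : ℤ) else 1 := by
    cases o <;> simp [vertexSign]
  simp_rw [h]
  rw [Finset.prod_comm, ← Finset.prod_pow_eq_pow_sum]
  refine Finset.prod_congr rfl fun j _ => ?_
  rw [Finset.prod_ite]
  simp [fiberPart]

lemma sum_card_fiberPart_le {k N : ℕ} (f : Fin N → Option (Fin k)) :
    ∑ j, (fiberPart f j).card ≤ N := by
  rw [← Finset.card_biUnion fun a _ b _ h => disjoint_fiberPart f a b h]
  simpa using Finset.card_le_univ (Finset.univ.biUnion (fiberPart f))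

lemma cellCount_eq (k N i : ℕ) :
    (cellCount k N i : ℤ) = ∑ f : Fin N → Option (Fin k),
      if (∀ j, ∃ v, f v = some j) ∧ ∑ j, (fiberPart f j).card = k + i then 1 else 0 := by
  classical
  rw [Finset.sum_boole, ← Fintype.card_subtype, ← Nat.card_eq_fintype_card, cellCount]
  congr 1
  symm
  refine Nat.card_congr (Equiv.ofBijective (fun f => ⟨fiberPart f.1, ?_, ?_, f.2.2⟩) ⟨?_, ?_⟩)
  · exact fun j => (fiberPart_ne_empty_iff _ j).2 (f.2.1 j)
  · exact disjoint_fiberPart f.1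
  · intro f g h
    exact Subtype.ext (fiberPart_injective (congrArg Subtype.val h))
  · rintro ⟨S, h1, h2, h3⟩
    obtain ⟨f, rfl⟩ := exists_fiberPart_eq S h2
    exact ⟨⟨f, fun j => (fiberPart_ne_empty_iff f j).1 (h1 j), h3⟩, rfl⟩

/-- The Euler characteristic as a signed count of assignments that use every part. -/
lemma eulerCharV_eq_sum (k N : ℕ) :
    eulerCharV k N = ∑ f : Fin N → Option (Fin k),
      (-1) ^ k * (if ∀ j, ∃ v, f v = some j then 1 else 0) * ∏ v, vertexSign (f v) := by
  simp_rw [eulerCharV, cellCount_eq, Finset.mul_sum]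
  rw [Finset.sum_comm]
  refine Finset.sum_congr rfl fun f _ => ?_
  by_cases hf : ∀ j, ∃ v, f v = some j
  · have hle : k ≤ ∑ j, (fiberPart f j).card := by
      calc k = ∑ j : Fin k, 1 := by simp
        _ ≤ _ := Finset.sum_le_sum fun j _ => Finset.card_pos.2
          (Finset.nonempty_iff_ne_empty.2 ((fiberPart_ne_empty_iff f j).2 (hf j)))
    obtain ⟨d, hd⟩ := Nat.exists_eq_add_of_le hle
    have hN := sum_card_fiberPart_le f
    rw [prod_vertexSign, hd, Finset.sum_eq_single d]
    · simp [hf, pow_add, ← mul_assoc, ← mul_pow]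
    · intro i _ hi
      simp [Ne.symm hi]
    · intro h
      simp only [Finset.mem_range] at h
      omega
  · simp [hf]

/-- Inclusion-exclusion: `U` ranges over the sets of parts that `f` is allowed to use. -/
lemma sign_mul_surj_indicator {k N : ℕ} (f : Fin N → Option (Fin k)) :
    (-1 : ℤ) ^ k * (if ∀ j, ∃ v, f v = some j then 1 else 0) =
      ∑ U : Finset (Fin k), (-1) ^ U.card * ∏ v, if ∀ j ∉ U, f v ≠ some j then 1 else 0 := by
  classical
  calc (-1 : ℤ) ^ k * (if ∀ j, ∃ v, f v = some j then 1 else 0)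
      = ∏ j : Fin k, ((-1) + if ∀ v, f v ≠ some j then 1 else 0) := by
        have h (j : Fin k) : ((-1 : ℤ) + if ∀ v, f v ≠ some j then 1 else 0) =
            (-1) * if ∃ v, f v = some j then 1 else 0 := by
          by_cases hj : ∃ v, f v = some j
          · simp [hj]
          · have : ∀ v, f v ≠ some j := by simpa using hj
            simp [this]
        simp_rw [h]
        rw [Finset.prod_mul_distrib, Finset.prod_ite_zero]
        simp
    _ = _ := by
        rw [Finset.prod_add, Finset.powerset_univ]
        refine Finset.sum_congr rfl fun U _ => ?_
        rw [Finset.prod_const, Finset.prod_ite_zero, Finset.prod_ite_zero]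
        simp only [Finset.prod_const_one, Finset.mem_sdiff, Finset.mem_univ, true_and,
          forall_const]
        congr 2
        exact propext ⟨fun h v j hj => h j hj v, fun h j hj v => h v j hj⟩

lemma eulerCharV_eq (k N : ℕ) :
    eulerCharV k N = ∑ U : Finset (Fin k), (-1) ^ U.card * (1 - (U.card : ℤ)) ^ N := by
  classical
  rw [eulerCharV_eq_sum]
  simp_rw [sign_mul_surj_indicator, Finset.sum_mul]
  rw [Finset.sum_comm]
  refine Finset.sum_congr rfl fun U _ => ?_
  simp_rw [mul_assoc, ← Finset.mul_sum, ← Finset.prod_mul_distrib]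
  congr 1
  rw [← Fintype.sum_pow (fun o : Option (Fin k) =>
    (if ∀ j ∉ U, o ≠ some j then 1 else 0) * vertexSign o) N]
  congr 1
  have h (j : Fin k) : (∀ i ∉ U, some j ≠ some i) ↔ j ∈ U := by
    constructor
    · intro h
      by_contra hj
      exact h j hj rfl
    · rintro hj i hi ⟨⟩
      exact hi hj
  rw [Fintype.sum_option]
  simp only [h]
  simp [vertexSign, sub_eq_add_neg]

lemma hasSum_eulerCharV (k : ℕ) (y : ℝ) :
    HasSum (fun n : ℕ => (eulerCharV k n : ℝ) * (y ^ n / n.factorial))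
      (Real.exp y * (1 - Real.exp (-y)) ^ k) := by
  have h (z : ℝ) : HasSum (fun n : ℕ => z ^ n / n.factorial) (Real.exp z) := by
    rw [Real.exp_eq_exp_ℝ]
    exact NormedSpace.expSeries_div_hasSum_exp z
  have key := hasSum_sum (s := (Finset.univ : Finset (Finset (Fin k)))) fun U _ =>
    (h ((1 - (U.card : ℝ)) * y)).mul_left ((-1) ^ U.card)
  have hterm : (fun n : ℕ => (eulerCharV k n : ℝ) * (y ^ n / n.factorial)) =
      fun n => ∑ U : Finset (Fin k),
        (-1) ^ U.card * (((1 - (U.card : ℝ)) * y) ^ n / n.factorial) := by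
    funext n
    rw [eulerCharV_eq]
    push_cast
    rw [Finset.sum_mul]
    refine Finset.sum_congr rfl fun U _ => ?_
    rw [mul_pow]
    ring
  have hval : Real.exp y * (1 - Real.exp (-y)) ^ k =
      ∑ U : Finset (Fin k), (-1) ^ U.card * Real.exp ((1 - (U.card : ℝ)) * y) := by
    have hb := Fintype.sum_pow_mul_eq_add_pow (Fin k) (-Real.exp (-y)) 1
    rw [Fintype.card_fin] at hb
    rw [show 1 - Real.exp (-y) = -Real.exp (-y) + 1 by ring, ← hb, Finset.mul_sum]
    refine Finset.sum_congr rfl fun U _ => ?_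
    rw [show (1 - (U.card : ℝ)) * y = y + U.card * (-y) by ring, Real.exp_add,
      Real.exp_nat_mul, neg_pow]
    ring
  rw [hterm, hval]
  exact key

/-- With `χ_{k,n}` the Euler characteristic of `D_k(Δ^n)` (so `eulerCharV k n = χ_{k,n-1}`),
the two-variable exponential generating function satisfies
`∑_{k,n} χ_{k,n-1} (x^k/k!)(y^n/n!) = e^{x + y - x e^{-y}}`. -/
theorem eulerChar_exponential_generating_function (x y : ℝ) :
    ∑' (k : ℕ), ∑' (n : ℕ),
        (eulerCharV k n : ℝ) * x ^ k / (Nat.factorial k) * y ^ n / (Nat.factorial n)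
      = Real.exp (x + y - x * Real.exp (-y)) := by
  have hinner (k : ℕ) : ∑' n : ℕ,
      (eulerCharV k n : ℝ) * x ^ k / (Nat.factorial k) * y ^ n / (Nat.factorial n) =
        Real.exp y * ((x * (1 - Real.exp (-y))) ^ k / k.factorial) := by
    rw [mul_pow, show Real.exp y * (x ^ k * (1 - Real.exp (-y)) ^ k / k.factorial) =
      x ^ k / k.factorial * (Real.exp y * (1 - Real.exp (-y)) ^ k) by ring,
      ← ((hasSum_eulerCharV k y).mul_left (x ^ k / k.factorial)).tsum_eq]
    exact tsum_congr fun n => by ring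
  simp_rw [hinner]
  rw [tsum_mul_left, (NormedSpace.expSeries_div_hasSum_exp (x * (1 - Real.exp (-y)))).tsum_eq,
    ← Real.exp_eq_exp_ℝ, ← Real.exp_add]
  congr 1
  ring
end

section
/- For integers n ≥ 1 and 2 ≤ k ≤ n, the order complex of the poset Π̃_{≤n}^k of ordered partial partitions of [n] with exactly k parts has the homotopy type of a wedge of spheres of dimension n−k. -/
/-! An ordered partial partition with `k` parts of `[n]` is the same as a partial surjection from
`Fin n` to `Fin k`, and the order is inclusion of graphs. Chains have at most `n - k + 1` elements, so
the order complex has dimension at most `n - k`. It therefore suffices to find a set `C` of facets of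
dimension `n - k` whose removal leaves a contractible subcomplex: collapsing that subcomplex to a point
is a homotopy equivalence, and the quotient is a wedge of one `(n - k)`-sphere for each facet in `C`.

The combinatorial half finds `C`. The inductive predicate `Good d S` says that a finite poset can be
built from a cone by adding elements one at a time, each with a link that is good in one degree less.
It is proved for a class of posets of partial functions closed under the links that arise (`good_PF`,
where the part of a link below an element is handled by `good_low`, and the two halves are combined by
`Good.join`). From a good poset one reads off, by recursion, chains of cardinality `d` whose removal
leaves a collapsible order complex (`Good.coll`).

The topological half makes this geometric. Collapsible complexes have contractible realizations
(`Coll.contractible`). A contraction of the subcomplex extends to a homotopy of the whole complex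
(`exists_homotopy`), so that the collapse map is a homotopy equivalence
(`homotopyEquiv_of_collapse`). The collapse map onto the wedge is assembled from the open facets in
`C`, which are open cells (`cellHomeo`), and from the description of the sphere as the one-point
compactification of a hyperplane (`exists_collapse_sphere`, `exists_collapse_wedge`). -/

open scoped BigOperators

/-- A basepoint on the `d`-dimensional sphere. -/
noncomputable def spherePt (d : ℕ) : Metric.sphere (0 : EuclideanSpace ℝ (Fin (d + 1))) 1 :=
  ⟨EuclideanSpace.single 0 1, by simp⟩

/-- The points of `pt ⊕ (Fin m × S^d)` that are identified to form the wedge. -/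
def isWedgeBase (m d : ℕ) :
    (Unit ⊕ (Fin m × Metric.sphere (0 : EuclideanSpace ℝ (Fin (d + 1))) 1)) → Prop
  | Sum.inl _ => True
  | Sum.inr p => p.2 = spherePt d

/-- A wedge of `m` spheres of dimension `d`: the one-point union of `m` copies of the
`d`-sphere, which is a single point when `m = 0`. -/
def WedgeOfSpheres (m d : ℕ) : Type :=
  Quot (fun a b => isWedgeBase m d a ∧ isWedgeBase m d b)

noncomputable instance (m d : ℕ) : TopologicalSpace (WedgeOfSpheres m d) := by
  unfold WedgeOfSpheres; infer_instance

/-- Ordered partial partitions of `[n] = {1,…,n}` with exactly `k` parts: `k`-tuples of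
pairwise disjoint nonempty subsets of `[n]`. -/
def OPP (n k : ℕ) : Type :=
  {S : Fin k → Finset (Fin n) // (∀ j, S j ≠ ∅) ∧ ∀ a b : Fin k, a ≠ b → Disjoint (S a) (S b)}

/-- The partial order on ordered partial partitions: componentwise inclusion. -/
instance (n k : ℕ) : PartialOrder (OPP n k) where
  le S T := ∀ j, S.1 j ⊆ T.1 j
  le_refl S j := le_refl _
  le_trans S T U h h' j := (h j).trans (h' j)
  le_antisymm S T h h' := Subtype.ext (funext fun j => Finset.Subset.antisymm (h j) (h' j))

instance (n k : ℕ) : Finite (OPP n k) := by unfold OPP; infer_instance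

noncomputable instance (n k : ℕ) : Fintype (OPP n k) := Fintype.ofFinite _

/-- Geometric realization of the order complex of a finite poset `P`: the simplicial
complex whose simplices are the chains of `P`. -/
def orderComplex (P : Type) [PartialOrder P] [Fintype P] : Set (P → ℝ) :=
  {x | (∀ a, 0 ≤ x a) ∧ (∑ a, x a = 1) ∧ IsChain (· ≤ ·) {a | x a ≠ 0}}


/-! ### A recursive shelling-type property of finite posets -/

section Good
variable {α : Type*} [PartialOrder α]

/-- Comparability of two elements of a poset. -/
def Cmp (u v : α) : Prop := u ≤ v ∨ v ≤ u

/-- `Good d S` certifies that the order complex of `S` becomes collapsible once some chains of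
cardinality `d` (simplices of dimension `d - 1`) are deleted, provided no chain of `S` has more than
`d` elements (`Good.coll`). Either `S` is empty and `d = 0`, or `S` is a cone, or some `v` can be
deleted, both the deletion and the link of `v` being good in the appropriate degree. The index `d` of
a cone is arbitrary: nothing has to be deleted from it. -/
inductive Good : ℕ → Set α → Prop
  | empty : Good 0 ∅
  | cone (d : ℕ) (S : Set α) (w : α) (hw : w ∈ S) (h : ∀ u ∈ S, Cmp u w) : Good d S
  | step (d : ℕ) (S : Set α) (v : α) (hv : v ∈ S) (h1 : Good (d + 1) (S \ {v}))
      (h2 : Good d {u ∈ S | u ≠ v ∧ Cmp u v}) : Good (d + 1) S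

/-- The ordinal sum of two good posets is good. -/
theorem Good.join {a b : ℕ} {L H : Set α} (hL : Good a L) (hH : Good b H)
    (hlt : ∀ l ∈ L, ∀ h ∈ H, l < h) : Good (a + b) (L ∪ H) := by
  induction hL with
  | empty => simpa using hH
  | cone d S w hw h =>
    refine Good.cone _ _ w (Or.inl hw) ?_
    rintro u (hu | hu)
    · exact h u hu
    · exact Or.inr (hlt w hw u hu).le
  | step d S v hv h1 h2 ih1 ih2 =>
    have e : d + 1 + b = (d + b) + 1 := by omega
    rw [e] at ih1 ⊢
    refine Good.step _ _ v (Or.inl hv) ?_ ?_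
    · convert ih1 (fun l hl => hlt l hl.1) using 1
      ext u
      have := hlt v hv u
      constructor
      · rintro ⟨hu | hu, hne⟩
        · exact Or.inl ⟨hu, hne⟩
        · exact Or.inr hu
      · rintro (⟨hu, hne⟩ | hu)
        · exact ⟨Or.inl hu, hne⟩
        · exact ⟨Or.inr hu, (this hu).ne'⟩
    · convert ih2 (fun l hl => hlt l hl.1) using 1
      ext u
      have := hlt v hv u
      constructor
      · rintro ⟨hu | hu, hne⟩
        · exact Or.inl ⟨hu, hne⟩
        · exact Or.inr hu
      · rintro (⟨hu, hne⟩ | hu)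
        · exact ⟨Or.inl hu, hne⟩
        · exact ⟨Or.inr hu, (this hu).ne', Or.inr (this hu).le⟩

/-- Adding the elements of `T` to `S` in increasing order: when `v` is added, its link consists of the
elements of `S` comparable to `v` and of the elements of `T` below `v`. -/
theorem Good.addInc [Finite α] {d : ℕ} {S : Set α} (hS : Good (d + 1) S) (T : Set α)
    (hd : ∀ v ∈ T, v ∉ S)
    (h : ∀ v ∈ T, Good d ({u ∈ S | Cmp u v} ∪ {u ∈ T | u < v})) : Good (d + 1) (S ∪ T) := by
  induction hn : T.ncard generalizing T with
  | zero =>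
    rw [Set.ncard_eq_zero] at hn
    simpa [hn] using hS
  | succ n ih =>
    have hne : T.Nonempty := by
      rw [← Set.ncard_pos]; omega
    obtain ⟨v, hvT, hmax⟩ := (Set.toFinite T).exists_maximal hne
    refine Good.step _ _ v (Or.inr hvT) ?_ ?_
    · have : (S ∪ T) \ {v} = S ∪ (T \ {v}) := by
        ext u
        have := hd v hvT
        simp only [Set.mem_sdiff, Set.mem_union, Set.mem_singleton_iff]
        grind
      rw [this]
      refine ih _ (fun u hu => hd u hu.1) ?_ ?_
      · intro u hu
        convert h u hu.1 using 2
        ext t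
        simp only [Set.mem_ofPred_eq, Set.mem_sdiff, Set.mem_singleton_iff]
        constructor
        · rintro ⟨⟨h1, h2⟩, h3⟩; exact ⟨h1, h3⟩
        · rintro ⟨h1, h3⟩
          refine ⟨⟨h1, ?_⟩, h3⟩
          rintro rfl
          exact absurd (hmax hu.1 h3.le) (not_le_of_gt h3)
      · rw [Set.ncard_sdiff_singleton_of_mem hvT]; omega
    · convert h v hvT using 1
      ext u
      simp only [Set.mem_ofPred_eq, Set.mem_union]
      constructor
      · rintro ⟨hu | hu, hne, hc⟩
        · exact Or.inl ⟨hu, hc⟩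
        · refine Or.inr ⟨hu, ?_⟩
          rcases hc with hc | hc
          · exact lt_of_le_of_ne hc hne
          · exact absurd (le_antisymm (hmax hu hc) hc) hne
      · rintro (⟨hu, hc⟩ | ⟨hu, hc⟩)
        · exact ⟨Or.inl hu, fun e => hd v hvT (e ▸ hu), hc⟩
        · exact ⟨Or.inr hu, hc.ne, Or.inl hc.le⟩

/-- Adding the elements of `T` to `S` in decreasing order: when `v` is added, its link consists of the
elements of `S` comparable to `v` and of the elements of `T` above `v`. -/
theorem Good.addDec [Finite α] {d : ℕ} {S : Set α} (hS : Good (d + 1) S) (T : Set α)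
    (hd : ∀ v ∈ T, v ∉ S)
    (h : ∀ v ∈ T, Good d ({u ∈ S | Cmp u v} ∪ {u ∈ T | v < u})) : Good (d + 1) (S ∪ T) := by
  induction hn : T.ncard generalizing T with
  | zero =>
    rw [Set.ncard_eq_zero] at hn
    simpa [hn] using hS
  | succ n ih =>
    have hne : T.Nonempty := by
      rw [← Set.ncard_pos]; omega
    obtain ⟨v, hvT, hmin⟩ := (Set.toFinite T).exists_minimal hne
    refine Good.step _ _ v (Or.inr hvT) ?_ ?_
    · have : (S ∪ T) \ {v} = S ∪ (T \ {v}) := by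
        ext u
        have := hd v hvT
        simp only [Set.mem_sdiff, Set.mem_union, Set.mem_singleton_iff]
        grind
      rw [this]
      refine ih _ (fun u hu => hd u hu.1) ?_ ?_
      · intro u hu
        convert h u hu.1 using 2
        ext t
        simp only [Set.mem_ofPred_eq, Set.mem_sdiff, Set.mem_singleton_iff]
        constructor
        · rintro ⟨⟨h1, h2⟩, h3⟩; exact ⟨h1, h3⟩
        · rintro ⟨h1, h3⟩
          refine ⟨⟨h1, ?_⟩, h3⟩
          rintro rfl
          exact absurd (hmin hu.1 h3.le) (not_le_of_gt h3)
      · rw [Set.ncard_sdiff_singleton_of_mem hvT]; omega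
    · convert h v hvT using 1
      ext u
      simp only [Set.mem_ofPred_eq, Set.mem_union]
      constructor
      · rintro ⟨hu | hu, hne, hc⟩
        · exact Or.inl ⟨hu, hc⟩
        · refine Or.inr ⟨hu, ?_⟩
          rcases hc with hc | hc
          · exact absurd (le_antisymm hc (hmin hu hc)) hne
          · exact lt_of_le_of_ne hc hne.symm
      · rintro (⟨hu, hc⟩ | ⟨hu, hc⟩)
        · exact ⟨Or.inl hu, fun e => hd v hvT (e ▸ hu), hc⟩
        · exact ⟨Or.inr hu, hc.ne', Or.inr hc.le⟩

/-- Goodness transfers along an order isomorphism onto the image of an order embedding. -/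
theorem Good.comap {β : Type*} [PartialOrder β] (φ : α ↪o β) {d : ℕ} {T : Set β}
    (hT : Good d T) : ∀ S : Set α, φ '' S = T → Good d S := by
  induction hT with
  | empty =>
    intro S hS
    rw [Set.image_eq_empty] at hS
    rw [hS]; exact Good.empty
  | cone d T w hw h =>
    rintro S rfl
    obtain ⟨w, hw, rfl⟩ := hw
    refine Good.cone _ _ w hw fun u hu => ?_
    simpa [Cmp] using h (φ u) ⟨u, hu, rfl⟩
  | step d T v hv h1 h2 ih1 ih2 =>
    rintro S rfl
    obtain ⟨v, hv, rfl⟩ := hv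
    refine Good.step _ _ v hv (ih1 _ ?_) (ih2 _ ?_)
    · rw [Set.image_sdiff φ.injective, Set.image_singleton]
    · ext u
      constructor
      · rintro ⟨u, ⟨hu, hne, hc⟩, rfl⟩
        exact ⟨⟨u, hu, rfl⟩, by simpa using hne, by simpa [Cmp] using hc⟩
      · rintro ⟨⟨u, hu, rfl⟩, hne, hc⟩
        exact ⟨u, ⟨hu, by simpa using hne, by simpa [Cmp] using hc⟩, rfl⟩

end Good

/-! ### Intervals below an element -/

section Low
variable {ι κ : Type*} [DecidableEq ι] [DecidableEq κ]

/-- Sets of pairs between `B` (allowed) and `B ∪ G` (excluded) whose part in `G` meets every colour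
`a ∈ A`, where the colour of a pair is its second component. -/
def Low (B G : Finset (ι × κ)) (A : Finset κ) : Set (Finset (ι × κ)) :=
  {f | B ⊆ f ∧ f ⊂ B ∪ G ∧ ∀ a ∈ A, ∃ p ∈ f, p ∈ G ∧ p.2 = a}

/-- Induction on `|G|`. If some `p ∈ G` is not the only pair of its colour when that colour is required,
the sets avoiding `p` form a cone with apex `(B ∪ G) \ {p}`. The sets `f ∋ p` with `f \ {p}` still in
the poset are then added in decreasing order, each with a cone as link (apex `f \ {p}`). The remaining
`f`, in which `p` is the only pair of its colour, are added in increasing order, and the link of `f`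
is the ordinal sum of two smaller posets of the same kind. If there is no such `p`, the pairs of `G`
have distinct required colours and the poset is empty. -/
theorem good_low [Finite ι] [Finite κ] (N : ℕ) : ∀ (B G : Finset (ι × κ)) (A : Finset κ), G.card = N → Disjoint B G →
    (∀ a ∈ A, ∃ p ∈ G, p.2 = a) → Good (G.card - A.card) (Low B G A) := by
  induction N using Nat.strong_induction_on with
  | _ N ih =>
  intro B G A hN hBG hA
  have hAG : A.card ≤ G.card := by
    refine (Finset.card_le_card (t := G.image Prod.snd) ?_).trans Finset.card_image_le
    intro a ha
    obtain ⟨p, hp, rfl⟩ := hA a ha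
    exact Finset.mem_image_of_mem _ hp
  by_cases hp : ∃ p ∈ G, ∀ a ∈ A, ∃ q ∈ G, q ≠ p ∧ q.2 = a
  swap
  · have hle : G.card ≤ A.card := by
      refine Finset.card_le_card_of_injOn Prod.snd ?_ ?_
      · intro p hpG
        by_contra hcon
        refine hp ⟨p, hpG, fun a ha => ?_⟩
        obtain ⟨q, hq, rfl⟩ := hA a ha
        exact ⟨q, hq, by rintro rfl; exact hcon ha, rfl⟩
      · intro p hpG q hqG hpq
        by_contra hne
        refine hp ⟨p, hpG, fun a ha => ?_⟩
        obtain ⟨r, hr, rfl⟩ := hA a ha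
        by_cases hrp : r = p
        · subst hrp; exact ⟨q, hqG, Ne.symm hne, hpq.symm⟩
        · exact ⟨r, hr, hrp, rfl⟩
    have h0 : G.card - A.card = 0 := by omega
    have : Low B G A = ∅ := by
      ext f
      simp only [Set.mem_empty_iff_false, iff_false]
      rintro ⟨hB, hf, hfA⟩
      have h1 : A.card ≤ (f ∩ G).card := by
        refine (Finset.card_le_card (t := (f ∩ G).image Prod.snd) ?_).trans Finset.card_image_le
        intro a ha
        obtain ⟨p, hp, hpG, rfl⟩ := hfA a ha
        exact Finset.mem_image_of_mem _ (Finset.mem_inter.2 ⟨hp, hpG⟩)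
      have h2 : f ∩ G = G := Finset.eq_of_subset_of_card_le Finset.inter_subset_right (by omega)
      refine hf.2 (Finset.union_subset hB ?_)
      rw [← h2]; exact Finset.inter_subset_left
    rw [this, h0]; exact Good.empty
  obtain ⟨p, hpG, hpA⟩ := hp
  have hpB : p ∉ B := fun h => Finset.disjoint_left.1 hBG h hpG
  have hlt : A.card + 1 ≤ G.card := by
    rw [← Finset.card_erase_add_one hpG, add_le_add_iff_right]
    refine (Finset.card_le_card (t := (G.erase p).image Prod.snd) ?_).trans Finset.card_image_le
    intro a ha
    obtain ⟨q, hq, hqp, rfl⟩ := hpA a ha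
    exact Finset.mem_image_of_mem _ (Finset.mem_erase.2 ⟨hqp, hq⟩)
  obtain ⟨d, hd⟩ : ∃ d, G.card - A.card = d + 1 := ⟨G.card - A.card - 1, by omega⟩
  rw [hd]
  -- `D0`, `D1`, `D2`: sets avoiding `p`, sets where `p` is redundant, sets where `p` is essential
  set D0 : Set (Finset (ι × κ)) := {f ∈ Low B G A | p ∉ f} with hD0
  set D1 : Set (Finset (ι × κ)) := {f ∈ Low B G A | p ∈ f ∧ f.erase p ∈ Low B G A} with hD1
  set D2 : Set (Finset (ι × κ)) := {f ∈ Low B G A | p ∈ f ∧ f.erase p ∉ Low B G A} with hD2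
  have hsplit : Low B G A = (D0 ∪ D1) ∪ D2 := by
    ext f
    simp only [hD0, hD1, hD2, Set.mem_union, Set.mem_ofPred_eq]
    tauto
  have key : ∀ f ∈ Low B G A, ∀ u ∈ Low B G A, u ⊆ f → p ∉ u → f.erase p ∈ Low B G A := by
    rintro f ⟨hf1, hf2, hf3⟩ u ⟨hu1, hu2, hu3⟩ huf hpu
    refine ⟨?_, lt_of_le_of_lt (Finset.erase_subset _ _) hf2, ?_⟩
    · intro b hb
      exact Finset.mem_erase.2 ⟨by rintro rfl; exact hpB hb, hf1 hb⟩
    · intro a ha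
      obtain ⟨q, hq, hqG, hqa⟩ := hu3 a ha
      exact ⟨q, Finset.mem_erase.2 ⟨by rintro rfl; exact hpu hq, huf hq⟩, hqG, hqa⟩
  have good0 : Good (d + 1) D0 := by
    refine Good.cone _ _ ((B ∪ G).erase p) ⟨⟨?_, ?_, ?_⟩, by simp⟩ ?_
    · intro b hb
      exact Finset.mem_erase.2 ⟨by rintro rfl; exact hpB hb, Finset.mem_union_left _ hb⟩
    · exact Finset.erase_ssubset (Finset.mem_union_right _ hpG)
    · intro a ha
      obtain ⟨q, hq, hqp, hqa⟩ := hpA a ha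
      exact ⟨q, Finset.mem_erase.2 ⟨hqp, Finset.mem_union_right _ hq⟩, hq, hqa⟩
    · rintro u ⟨⟨hu1, hu2, hu3⟩, hup⟩
      left
      intro q hq
      exact Finset.mem_erase.2 ⟨by rintro rfl; exact hup hq, hu2.1 hq⟩
  have good1 : Good (d + 1) (D0 ∪ D1) := by
    refine good0.addDec _ ?_ ?_
    · rintro v ⟨-, hv, -⟩ ⟨-, hv'⟩
      exact hv' hv
    · rintro f ⟨hf, hpf, hfe⟩
      refine Good.cone _ _ (f.erase p) (Or.inl ⟨⟨hfe, by simp⟩, Or.inl (Finset.erase_subset _ _)⟩) ?_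
      rintro u (⟨⟨hu, hpu⟩, hc⟩ | ⟨hu, hc⟩)
      · left
        rcases hc with hc | hc
        · intro q hq
          exact Finset.mem_erase.2 ⟨by rintro rfl; exact hpu hq, hc hq⟩
        · exact absurd (hc hpf) hpu
      · right
        exact (Finset.erase_subset _ _).trans hc.le
  rw [hsplit]
  refine good1.addInc _ ?_ ?_
  · rintro v ⟨-, hv, hv2⟩ (⟨-, hv'⟩ | ⟨-, -, hv'⟩)
    · exact hv' hv
    · exact hv2 hv'
  rintro f ⟨hf, hpf, hfe⟩
  obtain ⟨hf1, hf2, hf3⟩ := id hf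
  have hpA' : p.2 ∈ A ∧ ∀ q ∈ f, q ∈ G → q.2 = p.2 → q = p := by
    constructor
    · by_contra hcon
      refine hfe ⟨?_, lt_of_le_of_lt (Finset.erase_subset _ _) hf2, ?_⟩
      · intro b hb
        exact Finset.mem_erase.2 ⟨by rintro rfl; exact hpB hb, hf1 hb⟩
      · intro a ha
        obtain ⟨q, hq, hqG, rfl⟩ := hf3 a ha
        exact ⟨q, Finset.mem_erase.2 ⟨by rintro rfl; exact hcon ha, hq⟩, hqG, rfl⟩
    · intro q hq hqG hqp
      by_contra hne
      refine hfe ⟨?_, lt_of_le_of_lt (Finset.erase_subset _ _) hf2, ?_⟩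
      · intro b hb
        exact Finset.mem_erase.2 ⟨by rintro rfl; exact hpB hb, hf1 hb⟩
      · intro a ha
        obtain ⟨r, hr, hrG, rfl⟩ := hf3 a ha
        by_cases hrp : r = p
        · exact ⟨q, Finset.mem_erase.2 ⟨hne, hq⟩, hqG, by rw [hrp, hqp]⟩
        · exact ⟨r, Finset.mem_erase.2 ⟨hrp, hr⟩, hrG, rfl⟩
  obtain ⟨hpA1, hpA2⟩ := hpA'
  have cB : (B ∪ G).card = B.card + G.card := Finset.card_union_of_disjoint hBG
  have hfle : f.card < (B ∪ G).card := Finset.card_lt_card hf2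
  have hBf : (insert p B).card ≤ f.card := Finset.card_le_card (Finset.insert_subset hpf hf1)
  have hApos : 0 < A.card := Finset.card_pos.2 ⟨_, hpA1⟩
  rw [Finset.card_insert_of_notMem hpB] at hBf
  have hcl : (f \ insert p B).card = f.card - (B.card + 1) := by
    rw [Finset.card_sdiff_of_subset (Finset.insert_subset hpf hf1), Finset.card_insert_of_notMem hpB]
  have hcu : ((B ∪ G) \ f).card = B.card + G.card - f.card := by
    rw [Finset.card_sdiff_of_subset hf2.1, cB]
  have hcA : (A.erase p.2).card = A.card - 1 := Finset.card_erase_of_mem hpA1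
  have hAl : ∀ a ∈ A.erase p.2, ∃ q ∈ f \ insert p B, q.2 = a := by
    intro a ha
    obtain ⟨hap, ha⟩ := Finset.mem_erase.1 ha
    obtain ⟨q, hq, hqG, rfl⟩ := hf3 a ha
    refine ⟨q, ?_, rfl⟩
    simp only [Finset.mem_sdiff, Finset.mem_insert, not_or]
    exact ⟨hq, by rintro rfl; exact hap rfl, fun h => Finset.disjoint_left.1 hBG h hqG⟩
  have lowG := ih _ (by omega) (insert p B) (f \ insert p B) (A.erase p.2) rfl
    Finset.disjoint_sdiff hAl
  have upG := ih _ (by omega) f ((B ∪ G) \ f) {p.2} rfl Finset.disjoint_sdiff (by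
    intro a ha
    rw [Finset.mem_singleton] at ha
    subst ha
    obtain ⟨q, hq, hqp, hqa⟩ := hpA _ hpA1
    exact ⟨q, Finset.mem_sdiff.2 ⟨Finset.mem_union_right _ hq, fun h => hqp (hpA2 q h hq hqa)⟩, hqa⟩)
  have hcard : (A.erase p.2).card ≤ (f \ insert p B).card := by
    refine (Finset.card_le_card (t := (f \ insert p B).image Prod.snd) ?_).trans
      Finset.card_image_le
    intro a ha
    obtain ⟨p, hp, rfl⟩ := hAl a ha
    exact Finset.mem_image_of_mem _ hp
  have J := lowG.join upG (by
    rintro l ⟨-, hl, -⟩ h ⟨hh, -, hh3⟩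
    rw [Finset.union_sdiff_of_subset (Finset.insert_subset hpf hf1)] at hl
    exact lt_of_lt_of_le hl hh)
  have hdd : d = (f \ insert p B).card - (A.erase p.2).card +
      (((B ∪ G) \ f).card - ({p.2} : Finset κ).card) := by
    rw [Finset.card_singleton]
    omega
  rw [hdd]
  convert J using 1
  rw [Set.union_comm]
  congr 1
  · ext u
    simp only [Low, Finset.union_sdiff_of_subset (Finset.insert_subset hpf hf1)]
    constructor
    · rintro ⟨⟨⟨hu1, hu2, hu3⟩, hpu, hu⟩, huf⟩
      refine ⟨Finset.insert_subset hpu hu1, huf, ?_⟩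
      intro a ha
      obtain ⟨hap, ha⟩ := Finset.mem_erase.1 ha
      obtain ⟨q, hq, hqG, rfl⟩ := hu3 a ha
      refine ⟨q, hq, ?_, rfl⟩
      simp only [Finset.mem_sdiff, Finset.mem_insert, not_or]
      exact ⟨huf.le hq, by rintro rfl; exact hap rfl, fun h => Finset.disjoint_left.1 hBG h hqG⟩
    · rintro ⟨hu1, hu2, hu3⟩
      have hpu : p ∈ u := hu1 (Finset.mem_insert_self _ _)
      have huL : u ∈ Low B G A := by
        refine ⟨(Finset.subset_insert _ _).trans hu1, hu2.trans hf2, ?_⟩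
        intro a ha
        by_cases hap : a = p.2
        · exact ⟨p, hpu, hpG, hap.symm⟩
        · obtain ⟨q, hq, hq2, hqa⟩ := hu3 a (Finset.mem_erase.2 ⟨hap, ha⟩)
          simp only [Finset.mem_sdiff, Finset.mem_insert, not_or] at hq2
          refine ⟨q, hq, ?_, hqa⟩
          rcases Finset.mem_union.1 (hf2.1 hq2.1) with h | h
          · exact absurd h hq2.2.2
          · exact h
      refine ⟨⟨huL, hpu, ?_⟩, hu2⟩
      intro hcon
      exact hfe (key f hf _ hcon ((Finset.erase_subset _ _).trans hu2.1) (by simp))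
  · ext u
    simp only [Low, Finset.union_sdiff_of_subset hf2.1]
    constructor
    · rintro ⟨⟨hu, hpu⟩ | ⟨hu, hpu, hue⟩, hc⟩
      · rcases hc with hc | hc
        · exact absurd (key f hf u hu hc hpu) hfe
        · exact absurd (hc hpf) hpu
      · rcases hc with hc | hc
        · exact absurd (key f hf _ hue ((Finset.erase_subset _ _).trans hc) (by simp)) hfe
        · refine ⟨hc, hu.2.1, ?_⟩
          intro a ha
          rw [Finset.mem_singleton] at ha
          subst ha
          obtain ⟨q, hq, hqG, hqa⟩ := hue.2.2 _ hpA1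
          obtain ⟨hqp, hq⟩ := Finset.mem_erase.1 hq
          exact ⟨q, hq, Finset.mem_sdiff.2 ⟨Finset.mem_union_right _ hqG,
            fun h => hqp (hpA2 q h hqG hqa)⟩, hqa⟩
    · rintro ⟨hu1, hu2, hu3⟩
      obtain ⟨q, hq, hq2, hqa⟩ := hu3 p.2 (by simp)
      obtain ⟨hqBG, hqf⟩ := Finset.mem_sdiff.1 hq2
      have hqG : q ∈ G := by
        rcases Finset.mem_union.1 hqBG with h | h
        · exact absurd (hf1 h) hqf
        · exact h
      have hqp : q ≠ p := by rintro rfl; exact hqf hpf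
      refine ⟨Or.inr ⟨⟨hf1.trans hu1, hu2, ?_⟩, hu1 hpf, ?_, ?_, ?_⟩, Or.inr hu1⟩
      · intro a ha
        obtain ⟨r, hr, hrG, hra⟩ := hf3 a ha
        exact ⟨r, hu1 hr, hrG, hra⟩
      · intro b hb
        exact Finset.mem_erase.2 ⟨by rintro rfl; exact hpB hb, hu1 (hf1 hb)⟩
      · exact lt_of_le_of_lt (Finset.erase_subset _ _) hu2
      · intro a ha
        obtain ⟨r, hr, hrG, hra⟩ := hf3 a ha
        by_cases hrp : r = p
        · exact ⟨q, Finset.mem_erase.2 ⟨hqp, hq⟩, hqG, by rw [hqa, ← hra, hrp]⟩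
        · exact ⟨r, Finset.mem_erase.2 ⟨hrp, hu1 hr⟩, hrG, hra⟩

end Low

/-! ### Partial functions hitting prescribed values -/

section Upper
variable {ι κ : Type*} [DecidableEq ι] [DecidableEq κ]

/-- Graphs of partial functions `ι ⇀ κ` that extend `B`, agree with `B` outside `X`, and take every
value `a ∈ A` at some point of `X`. -/
def PF (B : Finset (ι × κ)) (X : Finset ι) (A : Finset κ) : Set (Finset (ι × κ)) :=
  {f | B ⊆ f ∧ (∀ p ∈ f, p ∉ B → p.1 ∈ X) ∧ (∀ p ∈ f, ∀ q ∈ f, p.1 = q.1 → p = q) ∧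
    ∀ a ∈ A, ∃ p ∈ f, p.1 ∈ X ∧ p.2 = a}

/-- The points of `X` where `f` is undefined, together with the points of `f`, are equinumerous with `X`
together with `B`. This makes the degrees of the two halves of a link add up. -/
theorem PF.card_dom {B f : Finset (ι × κ)} {X : Finset ι} {A : Finset κ} (hB : ∀ p ∈ B, p.1 ∉ X)
    (hf : f ∈ PF B X A) : (X \ f.image Prod.fst).card + f.card = X.card + B.card := by
  obtain ⟨h1, h2, h3, h4⟩ := hf
  have e : (f \ B).image Prod.fst = f.image Prod.fst ∩ X := by
    ext x
    simp only [Finset.mem_image, Finset.mem_sdiff, Finset.mem_inter]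
    constructor
    · rintro ⟨p, ⟨hp, hpB⟩, rfl⟩
      exact ⟨⟨p, hp, rfl⟩, h2 p hp hpB⟩
    · rintro ⟨⟨p, hp, rfl⟩, hpX⟩
      exact ⟨p, ⟨hp, fun h => hB p h hpX⟩, rfl⟩
  have c1 : ((f \ B).image Prod.fst).card = (f \ B).card := by
    refine Finset.card_image_of_injOn fun p hp q hq h => ?_
    exact h3 p (Finset.sdiff_subset hp) q (Finset.sdiff_subset hq) h
  have c2 : (f \ B).card + B.card = f.card := Finset.card_sdiff_add_card_eq_card h1
  have c3 : (X \ f.image Prod.fst).card + (f.image Prod.fst ∩ X).card = X.card := by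
    rw [Finset.inter_comm]; exact Finset.card_sdiff_add_card_inter _ _
  rw [e] at c1
  omega

/-- Induction on `|X|`. Fix `x ∈ X` and `a₁ ∈ A`. The functions with `f x = a₁` form a poset of the same
kind. To them are added, in increasing order, the functions undefined at `x` (`Q`), the link of `f`
being a cone with apex `f ∪ {(x, a₁)}`; next, in decreasing order, the functions with `f x = i ≠ a₁`
whose restriction to the complement of `x` still hits `A` (`T`), the link of `f` being a cone with
that restriction as apex; and finally, in increasing order, the functions where the value `i = f x`
is taken in `X` only at `x` (`R`). The link of such an `f` is the ordinal sum of a poset `Low` below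
`f` and a smaller `PF` above it. -/
theorem good_PF [Finite ι] [Finite κ] (N : ℕ) : ∀ (B : Finset (ι × κ)) (X : Finset ι)
    (A : Finset κ), X.card = N → (∀ p ∈ B, p.1 ∉ X) → (∀ p ∈ B, ∀ q ∈ B, p.1 = q.1 → p = q) →
    A.card ≤ X.card + 1 → Good (X.card + 1 - A.card) (PF B X A) := by
  induction N using Nat.strong_induction_on with
  | _ N ih =>
  intro B X A hN hBX hBf hAX
  rcases A.eq_empty_or_nonempty with rfl | ⟨a₁, ha₁⟩
  · exact Good.cone _ _ B ⟨subset_rfl, fun p hp h => absurd hp h, hBf, by simp⟩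
      fun u hu => Or.inr hu.1
  have hApos : 0 < A.card := Finset.card_pos.2 ⟨_, ha₁⟩
  by_cases hle : A.card ≤ X.card
  swap
  · have : PF B X A = ∅ := by
      ext f
      simp only [Set.mem_empty_iff_false, iff_false]
      rintro ⟨h1, h2, h3, h4⟩
      refine hle ?_
      calc A.card ≤ ((f.filter fun p => p.1 ∈ X).image Prod.snd).card := by
            refine Finset.card_le_card fun a ha => ?_
            obtain ⟨p, hp, hpX, rfl⟩ := h4 a ha
            exact Finset.mem_image_of_mem _ (Finset.mem_filter.2 ⟨hp, hpX⟩)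
        _ ≤ (f.filter fun p => p.1 ∈ X).card := Finset.card_image_le
        _ ≤ X.card := by
            refine Finset.card_le_card_of_injOn Prod.fst ?_ ?_
            · intro p hp
              exact (Finset.mem_filter.1 hp).2
            · intro p hp q hq h
              exact h3 p (Finset.mem_filter.1 hp).1 q (Finset.mem_filter.1 hq).1 h
    rw [this, show X.card + 1 - A.card = 0 by omega]
    exact Good.empty
  obtain ⟨d, hd⟩ : ∃ d, X.card = A.card + d := ⟨X.card - A.card, by omega⟩
  have hd' : X.card + 1 - A.card = d + 1 := by omega
  rw [hd']
  obtain ⟨x, hx⟩ : X.Nonempty := Finset.card_pos.1 (by omega)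
  have cX : (X.erase x).card + 1 = X.card := Finset.card_erase_add_one hx
  have cA : (A.erase a₁).card + 1 = A.card := Finset.card_erase_add_one ha₁
  have hxB : ∀ c, (x, c) ∉ B := fun c h => hBX _ h hx
  set Q := PF B (X.erase x) A with hQ
  set B1 := PF (insert (x, a₁) B) (X.erase x) (A.erase a₁) with hB1
  set T : Set (Finset (ι × κ)) := {f | f ∈ PF B X A ∧ ∃ i, i ≠ a₁ ∧ (x, i) ∈ f ∧ f.erase (x, i) ∈ Q}
    with hT
  set R : Set (Finset (ι × κ)) := {f | f ∈ PF B X A ∧ ∃ i, i ≠ a₁ ∧ (x, i) ∈ f ∧ f.erase (x, i) ∉ Q}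
    with hR
  have hQx : ∀ f ∈ Q, ∀ c, (x, c) ∉ f := by
    rintro f ⟨h1, h2, h3, h4⟩ c hc
    have := h2 _ hc (hxB c)
    simp at this
  have hQP : ∀ f ∈ Q, f ∈ PF B X A := by
    rintro f ⟨h1, h2, h3, h4⟩
    exact ⟨h1, fun p hp hpB => Finset.mem_of_mem_erase (h2 p hp hpB), h3, fun a ha => by
      obtain ⟨p, hp, hpX, hpa⟩ := h4 a ha
      exact ⟨p, hp, Finset.mem_of_mem_erase hpX, hpa⟩⟩
  have hPQ : ∀ f ∈ PF B X A, (∀ c, (x, c) ∉ f) → f ∈ Q := by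
    rintro f ⟨h1, h2, h3, h4⟩ hf
    have hne : ∀ p ∈ f, p.1 ≠ x := by
      rintro ⟨p, c⟩ hp rfl; exact hf c hp
    exact ⟨h1, fun p hp hpB => Finset.mem_erase.2 ⟨hne p hp, h2 p hp hpB⟩, h3, fun a ha => by
      obtain ⟨p, hp, hpX, hpa⟩ := h4 a ha
      exact ⟨p, hp, Finset.mem_erase.2 ⟨hne p hp, hpX⟩, hpa⟩⟩
  have hB1P : ∀ f, f ∈ B1 ↔ f ∈ PF B X A ∧ (x, a₁) ∈ f := by
    intro f
    constructor
    · rintro ⟨h1, h2, h3, h4⟩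
      have hxf := h1 (Finset.mem_insert_self _ _)
      refine ⟨⟨(Finset.subset_insert _ _).trans h1, ?_, h3, ?_⟩, hxf⟩
      · intro p hp hpB
        by_cases hpx : p = (x, a₁)
        · rw [hpx]; exact hx
        · refine Finset.mem_of_mem_erase (h2 p hp ?_)
          simp [hpx, hpB]
      · intro a ha
        by_cases haa : a = a₁
        · exact ⟨_, hxf, hx, haa.symm⟩
        · obtain ⟨p, hp, hpX, hpa⟩ := h4 a (Finset.mem_erase.2 ⟨haa, ha⟩)
          exact ⟨p, hp, Finset.mem_of_mem_erase hpX, hpa⟩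
    · rintro ⟨⟨h1, h2, h3, h4⟩, hxf⟩
      refine ⟨Finset.insert_subset hxf h1, ?_, h3, ?_⟩
      · intro p hp hpB
        simp only [Finset.mem_insert, not_or] at hpB
        exact Finset.mem_erase.2 ⟨fun h => hpB.1 (h3 _ hp _ hxf h), h2 p hp hpB.2⟩
      · intro a ha
        obtain ⟨haa, ha⟩ := Finset.mem_erase.1 ha
        obtain ⟨p, hp, hpX, rfl⟩ := h4 a ha
        refine ⟨p, hp, Finset.mem_erase.2 ⟨fun h => haa ?_, hpX⟩, rfl⟩
        rw [h3 _ hp _ hxf h]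
  have hsplit : PF B X A = (B1 ∪ Q ∪ T) ∪ R := by
    ext f
    simp only [Set.mem_union, hB1P]
    constructor
    · intro hf
      by_cases h : ∃ c, (x, c) ∈ f
      · obtain ⟨c, hc⟩ := h
        by_cases hca : c = a₁
        · subst hca; exact Or.inl (Or.inl (Or.inl ⟨hf, hc⟩))
        · by_cases he : f.erase (x, c) ∈ Q
          · exact Or.inl (Or.inr ⟨hf, c, hca, hc, he⟩)
          · exact Or.inr ⟨hf, c, hca, hc, he⟩
      · push Not at h
        exact Or.inl (Or.inl (Or.inr (hPQ f hf h)))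
    · rintro (((h | h) | h) | h)
      · exact h.1
      · exact hQP f h
      · exact h.1
      · exact h.1
  -- if a smaller element avoiding `x` is in the family, then removing `x` stays in `Q`
  have key : ∀ f ∈ PF B X A, ∀ i, (x, i) ∈ f → ∀ u ∈ Q, u ⊆ f → f.erase (x, i) ∈ Q := by
    rintro f ⟨h1, h2, h3, h4⟩ i hi u hu huf
    have hux := hQx u hu
    obtain ⟨u1, u2, u3, u4⟩ := hu
    have hsub : u ⊆ f.erase (x, i) := fun q hq =>
      Finset.mem_erase.2 ⟨by rintro rfl; exact hux i hq, huf hq⟩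
    refine ⟨u1.trans hsub, ?_, ?_, ?_⟩
    · intro p hp hpB
      obtain ⟨hpx, hp⟩ := Finset.mem_erase.1 hp
      exact Finset.mem_erase.2 ⟨fun h => hpx (h3 _ hp _ hi h), h2 p hp hpB⟩
    · intro p hp q hq
      exact h3 p (Finset.mem_of_mem_erase hp) q (Finset.mem_of_mem_erase hq)
    · intro a ha
      obtain ⟨p, hp, hpX, hpa⟩ := u4 a ha
      exact ⟨p, hsub hp, hpX, hpa⟩
  have gB1 : Good (d + 1) B1 := by
    have := ih _ (by omega) (insert (x, a₁) B) (X.erase x) (A.erase a₁) rfl ?_ ?_ (by omega)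
    · rwa [show (X.erase x).card + 1 - (A.erase a₁).card = d + 1 by omega] at this
    · intro p hp
      rcases Finset.mem_insert.1 hp with rfl | hp
      · simp
      · exact fun h => hBX p hp (Finset.mem_of_mem_erase h)
    · intro p hp q hq hpq
      rcases Finset.mem_insert.1 hp with rfl | hp <;> rcases Finset.mem_insert.1 hq with rfl | hq
      · rfl
      · exact absurd (hpq ▸ hx) (hBX q hq)
      · exact absurd (hpq ▸ hx) (hBX p hp)
      · exact hBf p hp q hq hpq
  have gQ : Good (d + 1) (B1 ∪ Q) := by
    refine gB1.addInc _ ?_ ?_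
    · intro v hv hv'
      exact hQx v hv a₁ ((hB1P v).1 hv').2
    · intro g hg
      have hgP := hQP g hg
      have hins : insert (x, a₁) g ∈ B1 := by
        rw [hB1P]
        refine ⟨?_, Finset.mem_insert_self _ _⟩
        obtain ⟨h1, h2, h3, h4⟩ := hgP
        have hne : ∀ p ∈ g, p.1 ≠ x := by
          rintro ⟨p, c⟩ hp rfl; exact hQx g hg c hp
        refine ⟨h1.trans (Finset.subset_insert _ _), ?_, ?_, ?_⟩
        · intro p hp hpB
          rcases Finset.mem_insert.1 hp with rfl | hp
          · exact hx
          · exact h2 p hp hpB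
        · intro p hp q hq hpq
          rcases Finset.mem_insert.1 hp with rfl | hp <;>
            rcases Finset.mem_insert.1 hq with rfl | hq
          · rfl
          · exact absurd hpq.symm (hne q hq)
          · exact absurd hpq (hne p hp)
          · exact h3 p hp q hq hpq
        · intro a ha
          obtain ⟨p, hp, hpX, hpa⟩ := h4 a ha
          exact ⟨p, Finset.mem_insert_of_mem hp, hpX, hpa⟩
      refine Good.cone _ _ _ (Or.inl ⟨hins, Or.inr (Finset.subset_insert _ _)⟩) ?_
      rintro u (⟨hu, hc⟩ | ⟨hu, hc⟩)
      · have hxu := ((hB1P u).1 hu).2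
        rcases hc with hc | hc
        · exact absurd (hc hxu) (hQx g hg a₁)
        · exact Or.inr (Finset.insert_subset hxu hc)
      · exact Or.inl (hc.le.trans (Finset.subset_insert _ _))
  have hB1no : ∀ f ∈ PF B X A, ∀ i, i ≠ a₁ → (x, i) ∈ f → ∀ u ∈ B1, ¬ Cmp u f := by
    rintro f hf i hi hxi u hu hc
    obtain ⟨hu, hxu⟩ := (hB1P u).1 hu
    rcases hc with hc | hc
    · have := hf.2.2.1 _ hxi _ (hc hxu) rfl
      simp [hi] at this
    · have := hu.2.2.1 _ hxu _ (hc hxi) rfl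
      simp [hi.symm] at this
  have gT : Good (d + 1) (B1 ∪ Q ∪ T) := by
    refine gQ.addDec _ ?_ ?_
    · rintro v ⟨hv, i, hi, hxi, -⟩ (hv' | hv')
      · exact hB1no v hv i hi hxi v hv' (Or.inl le_rfl)
      · exact hQx v hv' i hxi
    · rintro f ⟨hf, i, hi, hxi, hfe⟩
      refine Good.cone _ _ (f.erase (x, i))
        (Or.inl ⟨Or.inr hfe, Or.inl (Finset.erase_subset _ _)⟩) ?_
      rintro u (⟨hu | hu, hc⟩ | ⟨hu, hc⟩)
      · exact absurd hc (hB1no f hf i hi hxi u hu)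
      · rcases hc with hc | hc
        · left
          exact fun q hq => Finset.mem_erase.2 ⟨by rintro rfl; exact hQx u hu i hq, hc hq⟩
        · exact absurd (hc hxi) (hQx u hu i)
      · exact Or.inr ((Finset.erase_subset _ _).trans hc.le)
  rw [hsplit]
  refine gT.addInc _ ?_ ?_
  · rintro v ⟨hv, i, hi, hxi, hve⟩ ((hv' | hv') | ⟨-, j, hj, hxj, hve'⟩)
    · exact hB1no v hv i hi hxi v hv' (Or.inl le_rfl)
    · exact hQx v hv' i hxi
    · have := hv.2.2.1 _ hxi _ hxj rfl
      rw [← this] at hve'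
      exact hve hve'
  rintro f ⟨hf, i, hi, hxi, hfe⟩
  obtain ⟨h1, h2, h3, h4⟩ := id hf
  have hnx : ∀ p ∈ f, p ≠ (x, i) → p.1 ≠ x := fun p hp hne h => hne (h3 _ hp _ hxi h)
  have hfe' : ∀ B' : Finset (ι × κ), B' = f.erase (x, i) → (∀ a ∈ A, ∃ p ∈ B', p.1 ∈ X ∧ p.2 = a) →
      f.erase (x, i) ∈ Q := by
    rintro _ rfl h
    refine hPQ _ ⟨?_, ?_, ?_, h⟩ ?_
    · exact fun b hb => Finset.mem_erase.2 ⟨by rintro rfl; exact hxB _ hb, h1 hb⟩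
    · exact fun p hp => h2 p (Finset.mem_of_mem_erase hp)
    · exact fun p hp q hq => h3 p (Finset.mem_of_mem_erase hp) q (Finset.mem_of_mem_erase hq)
    · intro c hc
      obtain ⟨hc1, hc⟩ := Finset.mem_erase.1 hc
      exact hnx _ hc hc1 rfl
  have hiA : i ∈ A := by
    by_contra hcon
    refine hfe (hfe' _ rfl fun a ha => ?_)
    obtain ⟨p, hp, hpX, rfl⟩ := h4 a ha
    exact ⟨p, Finset.mem_erase.2 ⟨by rintro rfl; exact hcon ha, hp⟩, hpX, rfl⟩
  have huniq : ∀ p ∈ f, p.1 ∈ X → p.2 = i → p = (x, i) := by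
    intro p hp hpX hpi
    by_contra hne
    refine hfe (hfe' _ rfl fun a ha => ?_)
    obtain ⟨q, hq, hqX, rfl⟩ := h4 a ha
    by_cases hqx : q = (x, i)
    · exact ⟨p, Finset.mem_erase.2 ⟨hne, hp⟩, hpX, by rw [hpi, hqx]⟩
    · exact ⟨q, Finset.mem_erase.2 ⟨hqx, hq⟩, hqX, rfl⟩
  have hins : insert (x, i) B ⊆ f := Finset.insert_subset hxi h1
  have cI : (insert (x, i) B).card = B.card + 1 := Finset.card_insert_of_notMem (hxB i)
  have cG : (f \ insert (x, i) B).card + (B.card + 1) = f.card := by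
    rw [← cI]; exact Finset.card_sdiff_add_card_eq_card hins
  have cA' : (A.erase i).card + 1 = A.card := Finset.card_erase_add_one hiA
  have hAl : ∀ a ∈ A.erase i, ∃ q ∈ f \ insert (x, i) B, q.2 = a := by
    intro a ha
    obtain ⟨hai, ha⟩ := Finset.mem_erase.1 ha
    obtain ⟨q, hq, hqX, rfl⟩ := h4 a ha
    refine ⟨q, ?_, rfl⟩
    simp only [Finset.mem_sdiff, Finset.mem_insert, not_or]
    exact ⟨hq, by rintro rfl; exact hai rfl, fun h => hBX q h hqX⟩
  have cAG : (A.erase i).card ≤ (f \ insert (x, i) B).card := by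
    refine (Finset.card_le_card (t := (f \ insert (x, i) B).image Prod.snd) ?_).trans
      Finset.card_image_le
    intro a ha
    obtain ⟨p, hp, rfl⟩ := hAl a ha
    exact Finset.mem_image_of_mem _ hp
  have cD := PF.card_dom hBX hf
  have lowG := good_low _ (insert (x, i) B) (f \ insert (x, i) B) (A.erase i) rfl
    Finset.disjoint_sdiff hAl
  have upG := ih (X \ f.image Prod.fst).card (by omega) f (X \ f.image Prod.fst) {i} rfl (by
    intro p hp h
    exact (Finset.mem_sdiff.1 h).2 (Finset.mem_image_of_mem _ hp)) h3 (by simp)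
  have J := lowG.join upG (by
    rintro l ⟨-, hl, -⟩ h ⟨hh, -⟩
    rw [Finset.union_sdiff_of_subset hins] at hl
    exact lt_of_lt_of_le hl hh)
  -- the degrees add up because `PF.card_dom` computes the number of points where `f` is undefined
  have hdd : d = (f \ insert (x, i) B).card - (A.erase i).card +
      ((X \ f.image Prod.fst).card + 1 - ({i} : Finset κ).card) := by
    rw [Finset.card_singleton]
    omega
  rw [hdd]
  convert J using 1
  rw [Set.union_comm]
  congr 1
  · ext u
    simp only [Low, Finset.union_sdiff_of_subset hins]
    constructor
    · rintro ⟨⟨hu, j, hj, hxj, hue⟩, huf⟩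
      obtain ⟨u1, u2, u3, u4⟩ := id hu
      have hji : j = i := by
        have := h3 _ hxi _ (huf.le hxj) rfl
        simpa using this.symm
      subst hji
      refine ⟨Finset.insert_subset hxj u1, huf, ?_⟩
      intro a ha
      obtain ⟨hai, ha⟩ := Finset.mem_erase.1 ha
      obtain ⟨q, hq, hqX, rfl⟩ := u4 a ha
      refine ⟨q, hq, ?_, rfl⟩
      simp only [Finset.mem_sdiff, Finset.mem_insert, not_or]
      exact ⟨huf.le hq, by rintro rfl; exact hai rfl, fun h => hBX q h hqX⟩
    · rintro ⟨u1, u2, u3⟩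
      have hxu : (x, i) ∈ u := u1 (Finset.mem_insert_self _ _)
      have huP : u ∈ PF B X A := by
        refine ⟨(Finset.subset_insert _ _).trans u1, fun p hp => h2 p (u2.1 hp),
          fun p hp q hq => h3 p (u2.1 hp) q (u2.1 hq), ?_⟩
        intro a ha
        by_cases hai : a = i
        · exact ⟨_, hxu, hx, hai.symm⟩
        · obtain ⟨q, hq, hq2, hqa⟩ := u3 a (Finset.mem_erase.2 ⟨hai, ha⟩)
          simp only [Finset.mem_sdiff, Finset.mem_insert, not_or] at hq2
          exact ⟨q, hq, h2 q hq2.1 hq2.2.2, hqa⟩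
      refine ⟨⟨huP, i, hi, hxu, ?_⟩, u2⟩
      intro hcon
      exact hfe (key f hf i hxi _ hcon ((Finset.erase_subset _ _).trans u2.1))
  · ext u
    constructor
    · rintro ⟨(hu | hu) | ⟨hu, j, hj, hxj, hue⟩, hc⟩
      · exact absurd hc (hB1no f hf i hi hxi u hu)
      · rcases hc with hc | hc
        · exact absurd (key f hf i hxi u hu hc) hfe
        · exact absurd (hc hxi) (hQx u hu i)
      · rcases hc with hc | hc
        · exact absurd (key f hf i hxi _ hue ((Finset.erase_subset _ _).trans hc)) hfe
        · have hji : j = i := by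
            have := hu.2.2.1 _ hxj _ (hc hxi) rfl
            simpa using this
          subst hji
          have hnf : ∀ p ∈ u, p ∉ f → p.1 ∈ X \ f.image Prod.fst := by
            intro p hp hpf
            refine Finset.mem_sdiff.2 ⟨hu.2.1 p hp fun h => hpf (h1 h), fun h => ?_⟩
            obtain ⟨q, hq, hqp⟩ := Finset.mem_image.1 h
            exact hpf ((hu.2.2.1 q (hc hq) p hp hqp) ▸ hq)
          refine ⟨hc, hnf, hu.2.2.1, ?_⟩
          intro a ha
          rw [Finset.mem_singleton] at ha
          subst ha
          obtain ⟨q, hq, hqX, hqa⟩ := hue.2.2.2 _ hiA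
          obtain ⟨hqp, hq⟩ := Finset.mem_erase.1 hq
          exact ⟨q, hq, hnf q hq fun h => hqp (huniq q h (Finset.mem_of_mem_erase hqX) hqa), hqa⟩
    · rintro ⟨u1, u2, u3, u4⟩
      obtain ⟨q, hq, hq2, hqa⟩ := u4 i (by simp)
      obtain ⟨hqX, hqf⟩ := Finset.mem_sdiff.1 hq2
      have hqx : q ≠ (x, i) := by
        rintro rfl; exact hqf (Finset.mem_image_of_mem _ hxi)
      have huX : ∀ p ∈ u, p ∉ B → p.1 ∈ X := by
        intro p hp hpB
        by_cases hpf : p ∈ f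
        · exact h2 p hpf hpB
        · exact (Finset.mem_sdiff.1 (u2 p hp hpf)).1
      refine ⟨Or.inr ⟨⟨h1.trans u1, huX, u3, ?_⟩, i, hi, u1 hxi, ?_⟩, Or.inr u1⟩
      · intro a ha
        obtain ⟨r, hr, hrG, hra⟩ := h4 a ha
        exact ⟨r, u1 hr, hrG, hra⟩
      · have hne : ∀ p ∈ u.erase (x, i), p ∈ u ∧ p.1 ≠ x := by
          intro p hp
          obtain ⟨hp1, hp⟩ := Finset.mem_erase.1 hp
          exact ⟨hp, fun h => hp1 (u3 _ hp _ (u1 hxi) h)⟩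
        refine ⟨?_, ?_, ?_, ?_⟩
        · exact fun b hb => Finset.mem_erase.2 ⟨by rintro rfl; exact hxB _ hb, u1 (h1 hb)⟩
        · exact fun p hp hpB => Finset.mem_erase.2 ⟨(hne p hp).2, huX p (hne p hp).1 hpB⟩
        · exact fun p hp q hq => u3 p (hne p hp).1 q (hne q hq).1
        · intro a ha
          by_cases hai : a = i
          · have := Finset.mem_erase.2 ⟨hqx, hq⟩
            exact ⟨q, this, Finset.mem_erase.2 ⟨(hne q this).2, hqX⟩, hqa.trans hai.symm⟩
          · obtain ⟨r, hr, hrX, rfl⟩ := h4 a ha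
            have : r ∈ u.erase (x, i) :=
              Finset.mem_erase.2 ⟨by rintro rfl; exact hai rfl, u1 hr⟩
            exact ⟨r, this, Finset.mem_erase.2 ⟨(hne r this).2, hrX⟩, rfl⟩

end Upper

/-! ### Ordered partial partitions as partial surjections -/

section OPPGood

/-- The graph of the partial function `Fin n ⇀ Fin k` sending the elements of the `j`-th part to `j`. -/
def OPP.graphFun {n k : ℕ} (S : OPP n k) : Finset (Fin n × Fin k) :=
  Finset.univ.filter fun p => p.1 ∈ S.1 p.2

theorem OPP.mem_graphFun {n k : ℕ} (S : OPP n k) (p : Fin n × Fin k) :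
    p ∈ S.graphFun ↔ p.1 ∈ S.1 p.2 :=
  Finset.mem_filter_univ p

/-- `OPP.graphFun` as an order embedding. -/
def OPP.graph (n k : ℕ) : OPP n k ↪o Finset (Fin n × Fin k) :=
  OrderEmbedding.ofMapLEIff OPP.graphFun fun S T => by
    constructor
    · intro h j x hx
      exact (T.mem_graphFun (x, j)).1 (h ((S.mem_graphFun (x, j)).2 hx))
    · intro h p hp
      exact (T.mem_graphFun p).2 (h p.2 ((S.mem_graphFun p).1 hp))

theorem OPP.mem_graph {n k : ℕ} (S : OPP n k) (p : Fin n × Fin k) :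
    p ∈ OPP.graph n k S ↔ p.1 ∈ S.1 p.2 :=
  S.mem_graphFun p

/-- Ordered partial partitions with `k` parts are the partial surjections `Fin n ⇀ Fin k`. -/
theorem good_OPP (n k : ℕ) (hk : k ≤ n) : Good (n - k + 1) (Set.univ : Set (OPP n k)) := by
  have h := good_PF n (∅ : Finset (Fin n × Fin k)) Finset.univ Finset.univ (by simp) (by simp)
    (by simp) (by simp; omega)
  have e : (Finset.univ : Finset (Fin n)).card + 1 - (Finset.univ : Finset (Fin k)).card
      = n - k + 1 := by simp; omega
  rw [e] at h
  refine h.comap (OPP.graph n k) _ ?_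
  ext f
  constructor
  · rintro ⟨S, -, rfl⟩
    refine ⟨by simp, by simp, ?_, ?_⟩
    · rintro ⟨x, i⟩ hp ⟨y, j⟩ hq (rfl : x = y)
      rw [OPP.mem_graph] at hp hq
      by_contra hne
      have hij : i ≠ j := by rintro rfl; exact hne rfl
      exact Finset.disjoint_left.1 (S.2.2 i j hij) hp hq
    · intro a _
      obtain ⟨x, hx⟩ := Finset.nonempty_iff_ne_empty.2 (S.2.1 a)
      exact ⟨(x, a), (OPP.mem_graph _ _).2 hx, by simp, rfl⟩
  · rintro ⟨-, -, h3, h4⟩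
    refine ⟨⟨fun j => Finset.univ.filter fun x => (x, j) ∈ f, ?_, ?_⟩, trivial, ?_⟩
    · intro j
      obtain ⟨p, hp, -, rfl⟩ := h4 j (by simp)
      exact Finset.nonempty_iff_ne_empty.1 ⟨p.1, by simpa using hp⟩
    · intro a b hab
      rw [Finset.disjoint_left]
      intro x hx hy
      simp only [Finset.mem_filter, Finset.mem_univ, true_and] at hx hy
      have := h3 _ hx _ hy rfl
      simp [hab] at this
    · ext p
      exact (OPP.mem_graph _ p).trans (by simp)

/-- The total size of the parts is strictly monotone and takes values in `{k, …, n}`. -/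
theorem OPP.chain_card (n k : ℕ) (hk : k ≤ n) (c : Finset (OPP n k))
    (hc : IsChain (· ≤ ·) (c : Set (OPP n k))) : c.card ≤ n - k + 1 := by
  have hmono : ∀ S T : OPP n k, S ≤ T → S ≠ T →
      (∑ j, (S.1 j).card) < ∑ j, (T.1 j).card := by
    intro S T hST hne
    refine lt_of_le_of_ne (Finset.sum_le_sum fun j _ => Finset.card_le_card (hST j)) fun h => hne ?_
    have := (Finset.sum_eq_sum_iff_of_le fun j _ => Finset.card_le_card (hST j)).1 h
    exact Subtype.ext (funext fun j => Finset.eq_of_subset_of_card_le (hST j) (this j (by simp)).ge)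
  have hcard : (Finset.Icc k n).card = n - k + 1 := by simp; omega
  rw [← hcard]
  refine Finset.card_le_card_of_injOn (fun S => ∑ j, (S.1 j).card) ?_ ?_
  · intro S _
    simp only [Finset.coe_Icc, Set.mem_Icc]
    constructor
    · calc k = ∑ j : Fin k, 1 := by simp
        _ ≤ _ := Finset.sum_le_sum fun j _ =>
          Finset.card_pos.2 (Finset.nonempty_iff_ne_empty.2 (S.2.1 j))
    · rw [← Finset.card_biUnion (fun a _ b _ hab => S.2.2 a b hab)]
      exact (Finset.card_le_univ _).trans (by simp)
  · intro S hS T hT h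
    by_contra hne
    rcases hc hS hT hne with h' | h'
    · exact (hmono S T h' hne).ne h
    · exact (hmono T S h' (Ne.symm hne)).ne h.symm

end OPPGood

/-! ### Collapsible complexes -/

section Collapse
variable {α : Type*} [DecidableEq α]

/-- Collapsibility of a finite simplicial complex, given as a family of finite sets containing `∅`. In
`step`, every face containing `σ` can be enlarged by `v ∉ σ`, so that the faces `τ ⊇ σ` are removed in
pairs `(τ, τ ∪ {v})`. -/
inductive Coll : Set (Finset α) → Prop
  | point (v : α) : Coll {∅, {v}}
  | step (K : Set (Finset α)) (σ : Finset α) (v : α) (hσ : σ.Nonempty) (hv : v ∉ σ)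
      (h : ∀ τ ∈ K, σ ⊆ τ → insert v τ ∈ K) (hK : Coll {τ ∈ K | ¬ σ ⊆ τ}) : Coll K

/-- If the deletion and the link of a vertex `v` are collapsible then so is `K`: collapses of the link,
coned off by `v`, are collapses of `K`, and once the link is reduced to a point `w` the vertex `v` lies
on the single edge `{v, w}`. -/
theorem Coll.of_link {v : α} {L : Set (Finset α)} (hL : Coll L) : ∀ K : Set (Finset α),
    Coll {τ ∈ K | v ∉ τ} → {τ | v ∉ τ ∧ insert v τ ∈ K} = L → Coll K := by
  induction hL with
  | point w =>
    intro K hK hl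
    have h0 : v ∉ (∅ : Finset α) ∧ insert v ∅ ∈ K := by
      have : (∅ : Finset α) ∈ {τ | v ∉ τ ∧ insert v τ ∈ K} := by rw [hl]; simp
      exact this
    have h1 : v ∉ ({w} : Finset α) ∧ insert v {w} ∈ K := by
      have : ({w} : Finset α) ∈ {τ | v ∉ τ ∧ insert v τ ∈ K} := by rw [hl]; simp
      exact this
    have hwv : w ≠ v := by
      rintro rfl; simp at h1
    refine Coll.step K {v} w (by simp) (by simpa using hwv) ?_ ?_
    · intro τ hτ hvτ
      rw [Finset.singleton_subset_iff] at hvτ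
      have : τ.erase v ∈ ({∅, {w}} : Set (Finset α)) := by
        rw [← hl]
        exact ⟨by simp, by rwa [Finset.insert_erase hvτ]⟩
      have h2 : insert w τ = insert v {w} := by
        rw [← Finset.insert_erase hvτ]
        rcases this with h | h
        · rw [h]; exact Finset.insert_comm _ _ _
        · rw [Set.mem_singleton_iff.1 h]
          ext; simp
      rw [h2]; exact h1.2
    · simpa using hK
  | step L σ u hσ hu h hL' ih =>
    intro K hK hl
    by_cases hex : ∃ τ ∈ L, σ ⊆ τ
    swap
    · push Not at hex
      refine ih K hK ?_
      rw [hl]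
      ext τ
      exact ⟨fun hτ => ⟨hτ, hex τ hτ⟩, fun hτ => hτ.1⟩
    obtain ⟨τ₀, hτ₀, hστ₀⟩ := hex
    have hmem : ∀ τ, τ ∈ L ↔ v ∉ τ ∧ insert v τ ∈ K := by
      intro τ; rw [← hl]; rfl
    have hvσ : v ∉ σ := fun hc => ((hmem _).1 hτ₀).1 (hστ₀ hc)
    have huv : u ≠ v := by
      rintro rfl
      exact ((hmem _).1 (h _ hτ₀ hστ₀)).1 (Finset.mem_insert_self _ _)
    refine Coll.step K (insert v σ) u (by simp) (by simp [huv, hu]) ?_ ?_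
    · intro τ hτ hsub
      have hvτ : v ∈ τ := hsub (Finset.mem_insert_self _ _)
      have h1 : τ.erase v ∈ L := by
        rw [hmem, Finset.insert_erase hvτ]; exact ⟨by simp, hτ⟩
      have h2 : σ ⊆ τ.erase v := fun q hq =>
        Finset.mem_erase.2 ⟨by rintro rfl; exact hvσ hq, hsub (Finset.mem_insert_of_mem hq)⟩
      have h3 := ((hmem _).1 (h _ h1 h2)).2
      rwa [Finset.insert_comm, Finset.insert_erase hvτ] at h3
    · refine ih _ ?_ ?_
      · convert hK using 1
        ext τ
        constructor
        · rintro ⟨⟨h1, h2⟩, h3⟩; exact ⟨h1, h3⟩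
        · rintro ⟨h1, h3⟩
          exact ⟨⟨h1, fun h => h3 (h (Finset.mem_insert_self _ _))⟩, h3⟩
      · ext τ
        have hsub : v ∉ τ → (insert v σ ⊆ insert v τ ↔ σ ⊆ τ) := fun hv =>
          Finset.insert_subset_insert_iff hvσ
        constructor
        · rintro ⟨h1, h2, h3⟩
          exact ⟨(hmem _).2 ⟨h1, h2⟩, fun h => h3 ((hsub h1).2 h)⟩
        · rintro ⟨h1, h2⟩
          obtain ⟨h3, h4⟩ := (hmem _).1 h1
          exact ⟨h3, h4, fun h => h2 ((hsub h3).1 h)⟩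

/-- The finite chains of `S`, i.e. the faces of its order complex (and `∅`). -/
def Ch {α : Type*} [PartialOrder α] (S : Set α) : Set (Finset α) :=
  {c | (c : Set α) ⊆ S ∧ IsChain (· ≤ ·) (c : Set α)}

variable [PartialOrder α]

theorem Ch.insert_mem {S : Set α} {v : α} {c : Finset α} (hc : c ∈ Ch S) (hv : v ∈ S)
    (h : ∀ u ∈ c, Cmp u v) : insert v c ∈ Ch S := by
  refine ⟨?_, ?_⟩
  · rw [Finset.coe_insert]; exact Set.insert_subset hv hc.1
  · rw [Finset.coe_insert]
    exact hc.2.insert fun b hb _ => (h b hb).symm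

theorem Ch.mono {α : Type*} [PartialOrder α] {S T : Set α} (h : S ⊆ T) : Ch S ⊆ Ch T := fun _ hc => ⟨hc.1.trans h, hc.2⟩

theorem Ch.down {α : Type*} [PartialOrder α] {S : Set α} {c c' : Finset α} (h : c' ⊆ c) (hc : c ∈ Ch S) : c' ∈ Ch S :=
  ⟨(Finset.coe_subset.2 h).trans hc.1, hc.2.mono (Finset.coe_subset.2 h)⟩

omit [DecidableEq α] in
theorem Ch.erase_eq (S : Set α) (u : α) : {τ ∈ Ch S | u ∉ τ} = Ch (S \ {u}) := by
  ext c
  constructor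
  · rintro ⟨h1, h2⟩
    exact ⟨fun x hx => ⟨h1.1 hx, fun h => h2 ((Set.mem_singleton_iff.1 h) ▸ hx)⟩, h1.2⟩
  · rintro h
    exact ⟨Ch.mono Set.sdiff_subset h, fun hu => (h.1 hu).2 rfl⟩

theorem Ch.link_mem (S : Set α) {v : α} (hv : v ∈ S) (c : Finset α) :
    (v ∉ c ∧ insert v c ∈ Ch S) ↔ c ∈ Ch {u ∈ S | u ≠ v ∧ Cmp u v} := by
  constructor
  · rintro ⟨h1, h2⟩
    refine ⟨fun u hu => ⟨h2.1 (by simpa using Or.inr hu), ?_, ?_⟩,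
      (Ch.down (Finset.subset_insert v c) h2).2⟩
    · rintro rfl; exact h1 hu
    · exact h2.2.total (by simpa using Or.inr hu) (by simp)
  · intro h
    exact ⟨fun hc => (h.1 hc).2.1 rfl,
      Ch.insert_mem (Ch.mono (fun u hu => hu.1) h) hv fun u hu => (h.1 hu).2.2⟩

/-- The order complex of a poset with an element `w` comparable to all others is collapsible: the other
vertices are removed one at a time. -/
theorem coll_cone [Finite α] (N : ℕ) : ∀ (S : Set α) (w : α), S.ncard = N → w ∈ S →
    (∀ u ∈ S, Cmp u w) → Coll (Ch S) := by
  induction N with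
  | zero =>
    intro S w hN hw
    rw [Set.ncard_eq_zero] at hN
    simp [hN] at hw
  | succ N ih =>
    intro S w hN hw h
    by_cases hex : ∃ u ∈ S, u ≠ w
    · obtain ⟨u, hu, huw⟩ := hex
      refine Coll.step _ {u} w (by simp) (by simpa using huw.symm) ?_ ?_
      · intro τ hτ _
        exact Ch.insert_mem hτ hw fun x hx => h x (hτ.1 hx)
      · simp only [Finset.singleton_subset_iff]
        rw [Ch.erase_eq]
        refine ih _ w ?_ ⟨hw, huw.symm⟩ fun x hx => h x hx.1
        rw [Set.ncard_sdiff_singleton_of_mem hu]; omega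
    · push Not at hex
      have : Ch S = {∅, {w}} := by
        ext c
        constructor
        · rintro ⟨h1, h2⟩
          have : c ⊆ {w} := fun x hx => Finset.mem_singleton.2 (hex x (h1 hx))
          simpa [Finset.subset_singleton_iff] using this
        · rintro (rfl | rfl)
          · exact ⟨by simp, by simp⟩
          · exact ⟨by simpa using hw, by simp⟩
      rw [this]; exact Coll.point w

/-- The chains deleted from `S` are those deleted from `S \ {v}` and the joins with `v` of those deleted
from the link of `v`. -/
theorem Good.coll [Finite α] {d : ℕ} {S : Set α} (hS : Good d S) :
    (∀ c ∈ Ch S, c.card ≤ d) → (d = 0 ∧ S = ∅) ∨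
      ∃ C : Set (Finset α), C ⊆ Ch S ∧ (∀ c ∈ C, c.card = d) ∧ Coll (Ch S \ C) := by
  induction hS with
  | empty => intro _; exact Or.inl ⟨rfl, rfl⟩
  | cone d S w hw h =>
    intro _
    exact Or.inr ⟨∅, by simp, by simp, by simpa using coll_cone _ S w rfl hw h⟩
  | step d S v hv h1 h2 ih1 ih2 =>
    intro hb
    right
    obtain ⟨h, -⟩ | ⟨C1, hC1S, hC1, hcoll1⟩ := ih1 fun c hc => hb c (Ch.mono Set.sdiff_subset hc)
    · omega
    have hv1 : ∀ c ∈ C1, v ∉ c := fun c hc h => ((hC1S hc).1 h).2 rfl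
    have hb2 : ∀ c ∈ Ch {u ∈ S | u ≠ v ∧ Cmp u v}, c.card ≤ d := by
      intro c hc
      obtain ⟨h3, h4⟩ := (Ch.link_mem S hv c).2 hc
      have := hb _ h4
      rw [Finset.card_insert_of_notMem h3] at this
      omega
    rcases ih2 hb2 with ⟨rfl, hemp⟩ | ⟨C2, hC2S, hC2, hcoll2⟩
    · have hsing : ({v} : Finset α) ∈ Ch S := ⟨by simpa using hv, by simp⟩
      refine ⟨insert {v} C1, ?_, ?_, ?_⟩
      · rintro c (rfl | hc)
        · exact hsing
        · exact Ch.mono Set.sdiff_subset (hC1S hc)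
      · rintro c (rfl | hc)
        · simp
        · exact hC1 c hc
      · convert hcoll1 using 1
        ext c
        rw [← Ch.erase_eq]
        constructor
        · rintro ⟨hc1, hc2⟩
          refine ⟨⟨hc1, fun hvc => hc2 (Or.inl ?_)⟩, fun h => hc2 (Or.inr h)⟩
          have := (Ch.link_mem S hv (c.erase v)).1
            ⟨by simp, by rwa [Finset.insert_erase hvc]⟩
          rw [hemp] at this
          have he : c.erase v = ∅ := by
            have := this.1
            rwa [Set.subset_empty_iff, Finset.coe_eq_empty] at this
          rw [← Finset.insert_erase hvc, he]; rfl
        · rintro ⟨⟨hc1, hvc⟩, hc2⟩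
          refine ⟨hc1, ?_⟩
          rintro (rfl | h)
          · simp at hvc
          · exact hc2 h
    · have hv2 : ∀ c ∈ C2, v ∉ c := fun c hc h => ((hC2S hc).1 h).2.1 rfl
      refine ⟨C1 ∪ (insert v) '' C2, ?_, ?_, ?_⟩
      · rintro c (hc | ⟨c, hc, rfl⟩)
        · exact Ch.mono Set.sdiff_subset (hC1S hc)
        · exact ((Ch.link_mem S hv c).2 (hC2S hc)).2
      · rintro c (hc | ⟨c, hc, rfl⟩)
        · exact hC1 c hc
        · rw [Finset.card_insert_of_notMem (hv2 c hc), hC2 c hc]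
      · refine hcoll2.of_link _ (v := v) ?_ ?_
        · convert hcoll1 using 1
          ext c
          rw [← Ch.erase_eq]
          constructor
          · rintro ⟨⟨h1, h2⟩, h3⟩
            exact ⟨⟨h1, h3⟩, fun h => h2 (Or.inl h)⟩
          · rintro ⟨⟨h1, h3⟩, h2⟩
            refine ⟨⟨h1, ?_⟩, h3⟩
            rintro (h | ⟨c', hc', rfl⟩)
            · exact h2 h
            · simp at h3
        · ext c
          constructor
          · rintro ⟨h1, h2, h3⟩
            refine ⟨(Ch.link_mem S hv c).1 ⟨h1, h2⟩, fun h => h3 (Or.inr ⟨c, h, rfl⟩)⟩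
          · rintro ⟨h1, h2⟩
            obtain ⟨h3, h4⟩ := (Ch.link_mem S hv c).2 h1
            refine ⟨h3, h4, ?_⟩
            rintro (h | ⟨c', hc', he⟩)
            · exact hv1 _ h (Finset.mem_insert_self _ _)
            · refine h2 ?_
              rwa [← Finset.erase_insert h3, ← he, Finset.erase_insert (hv2 c' hc')]

end Collapse

/-! ### Geometric realizations and contractibility -/

section Geometric
variable {α : Type*} [Fintype α] [DecidableEq α]

/-- The support of `x`, as a `Finset`. -/
noncomputable def suppF {α : Type*} [Fintype α] (x : α → ℝ) : Finset α :=
  {a | x a ≠ 0}.toFinite.toFinset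

theorem mem_suppF {α : Type*} [Fintype α] (x : α → ℝ) (a : α) : a ∈ suppF x ↔ x a ≠ 0 := by
  simp [suppF]

/-- The geometric realization of the complex `K`: points with barycentric coordinates `x` whose support
is a face. -/
def Geo {α : Type*} [Fintype α] (K : Set (Finset α)) : Set (α → ℝ) :=
  {x | (∀ a, 0 ≤ x a) ∧ ∑ a, x a = 1 ∧ suppF x ∈ K}

/-- `K` is closed under passing to subsets. -/
def DownClosed {α : Type*} (K : Set (Finset α)) : Prop := ∀ s ∈ K, ∀ t, t ⊆ s → t ∈ K

omit [Fintype α] [DecidableEq α] in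
theorem continuous_inf' (σ : Finset α) (hσ : σ.Nonempty) :
    Continuous fun x : α → ℝ => σ.inf' hσ x := by
  refine Continuous.finset_inf'_apply hσ fun i _ => continuous_apply i

/-- The retraction realizing a collapse: the smallest coordinate on `σ` is subtracted from all
coordinates in `σ`, and the total mass so removed is moved to `v`. -/
noncomputable def push (σ : Finset α) (hσ : σ.Nonempty) (v : α) (x : α → ℝ) : α → ℝ := fun a =>
  x a - (if a ∈ σ then σ.inf' hσ x else 0) + (if a = v then σ.card * σ.inf' hσ x else 0)

omit [Fintype α] in
theorem continuous_push (σ : Finset α) (hσ : σ.Nonempty) (v : α) :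
    Continuous (push σ hσ v) := by
  refine continuous_pi fun a => ?_
  unfold push
  have h := continuous_inf' σ hσ
  split_ifs <;> fun_prop

omit [Fintype α] in
theorem push_nonneg {σ : Finset α} (hσ : σ.Nonempty) (v : α) {x : α → ℝ} (hx : ∀ a, 0 ≤ x a)
    (a : α) : 0 ≤ push σ hσ v x a := by
  have h0 : 0 ≤ σ.inf' hσ x := Finset.le_inf' _ _ fun b _ => hx b
  have h1 : a ∈ σ → σ.inf' hσ x ≤ x a := fun h => Finset.inf'_le _ h
  unfold push
  have := hx a
  have h2 : 0 ≤ σ.card * σ.inf' hσ x := by positivity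
  split_ifs with h h' <;> first | linarith [h1 h] | linarith

theorem push_sum {σ : Finset α} (hσ : σ.Nonempty) (v : α) {x : α → ℝ} :
    ∑ a, push σ hσ v x a = ∑ a, x a := by
  unfold push
  rw [Finset.sum_add_distrib, Finset.sum_sub_distrib]
  simp

omit [Fintype α] in
theorem push_eq {σ : Finset α} (hσ : σ.Nonempty) (v : α) {x : α → ℝ}
    (h : σ.inf' hσ x = 0) : push σ hσ v x = x := by
  funext a; simp [push, h]

omit [DecidableEq α] in
theorem inf'_eq_zero {σ : Finset α} (hσ : σ.Nonempty) {x : α → ℝ} (hx : ∀ a, 0 ≤ x a) :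
    σ.inf' hσ x = 0 ↔ ¬ σ ⊆ suppF x := by
  constructor
  · intro h hs
    obtain ⟨b, hb, he⟩ := Finset.exists_mem_eq_inf' hσ x
    exact (mem_suppF x b).1 (hs hb) (he ▸ h)
  · intro h
    obtain ⟨b, hb, hb'⟩ := Finset.not_subset.1 h
    rw [mem_suppF, not_not] at hb'
    exact le_antisymm (hb' ▸ Finset.inf'_le _ hb) (Finset.le_inf' _ _ fun b _ => hx b)

omit [DecidableEq α] in
/-- The segment between two points of a common closed simplex stays in the complex. -/
theorem segment_mem {K : Set (Finset α)} (hK : DownClosed K) {s : Finset α} (hs : s ∈ K)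
    {x y : α → ℝ} (hx : ∀ a, 0 ≤ x a) (hy : ∀ a, 0 ≤ y a) (hx1 : ∑ a, x a = 1)
    (hy1 : ∑ a, y a = 1) (hxs : suppF x ⊆ s) (hys : suppF y ⊆ s) (t : unitInterval) :
    (fun a => (1 - (t : ℝ)) * x a + t * y a) ∈ Geo K := by
  refine ⟨fun a => ?_, ?_, ?_⟩
  · have := t.2.1
    have := sub_nonneg.2 t.2.2
    have := hx a
    have := hy a
    positivity
  · rw [Finset.sum_add_distrib, ← Finset.mul_sum, ← Finset.mul_sum, hx1, hy1]; ring
  · refine hK s hs _ fun a ha => ?_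
    by_contra hc
    have h1 : x a = 0 := by by_contra h; exact hc (hxs ((mem_suppF x a).2 h))
    have h2 : y a = 0 := by by_contra h; exact hc (hys ((mem_suppF y a).2 h))
    exact (mem_suppF _ a).1 ha (by simp [h1, h2])

/-- Each elementary collapse `push` is homotopic to the identity along straight segments. -/
theorem Coll.contractible {K : Set (Finset α)} (h : Coll K) :
    DownClosed K → ContractibleSpace (Geo K) := by
  induction h with
  | point v =>
    intro _
    have key : ∀ x ∈ Geo ({∅, {v}} : Set (Finset α)), x = Pi.single v 1 := by
      rintro x ⟨_, h1, h2⟩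
      have h3 : ∀ a, a ≠ v → x a = 0 := by
        intro a ha
        by_contra hx
        have h4 := (mem_suppF x a).2 hx
        rcases h2 with h2 | h2 <;> rw [h2] at h4 <;> simp at h4
        exact ha h4
      have h5 : x v = 1 := by
        rw [← h1]; exact (Fintype.sum_eq_single v h3).symm
      funext a
      by_cases ha : a = v
      · subst ha; simp [h5]
      · simp [ha, h3 a ha]
    have hmem : (Pi.single v 1 : α → ℝ) ∈ Geo ({∅, {v}} : Set (Finset α)) := by
      refine ⟨fun a => ?_, by simp, Or.inr ?_⟩
      · by_cases ha : a = v
        · subst ha; simp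
        · simp [ha]
      · ext a; rw [mem_suppF]; by_cases ha : a = v
        · subst ha; simp
        · simp [ha]
    have : Unique (Geo ({∅, {v}} : Set (Finset α))) :=
      ⟨⟨⟨_, hmem⟩⟩, fun x => Subtype.ext (key x.1 x.2)⟩
    infer_instance
  | step K σ v hσ hv h hK' ih =>
    intro hK
    have hKd' : DownClosed {τ ∈ K | ¬ σ ⊆ τ} := fun s hs t hts =>
      ⟨hK s hs.1 t hts, fun hc => hs.2 (hc.trans hts)⟩
    have := ih hKd'
    have hsub : ∀ x : α → ℝ, suppF (push σ hσ v x) ⊆ insert v (suppF x ∪ σ) := by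
      intro x a ha
      by_contra hc
      simp only [Finset.mem_insert, Finset.mem_union, not_or, mem_suppF, not_not] at hc
      exact (mem_suppF _ _).1 ha (by simp [push, hc])
    have hpush : ∀ x ∈ Geo K, push σ hσ v x ∈ Geo {τ ∈ K | ¬ σ ⊆ τ} := by
      rintro x ⟨h0, h1, h2⟩
      refine ⟨push_nonneg hσ v h0, by rw [push_sum, h1], ?_⟩
      by_cases hc : σ ⊆ suppF x
      · refine ⟨hK _ (h _ h2 hc) _ ?_, ?_⟩
        · have := hsub x
          rwa [Finset.union_eq_left.2 hc] at this
        · obtain ⟨b, hb, he⟩ := Finset.exists_mem_eq_inf' hσ x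
          intro hs
          have hbv : b ≠ v := by rintro rfl; exact hv hb
          exact (mem_suppF _ _).1 (hs hb) (by simp [push, hb, hbv, he])
      · rw [push_eq hσ v ((inf'_eq_zero hσ h0).2 hc)]
        exact ⟨h2, hc⟩
    let i : C(Geo {τ ∈ K | ¬ σ ⊆ τ}, Geo K) :=
      ⟨fun x => ⟨x.1, x.2.1, x.2.2.1, x.2.2.2.1⟩, by fun_prop⟩
    let r : C(Geo K, Geo {τ ∈ K | ¬ σ ⊆ τ}) :=
      ⟨fun x => ⟨push σ hσ v x.1, hpush x.1 x.2⟩,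
        ((continuous_push σ hσ v).comp continuous_subtype_val).subtype_mk _⟩
    have hri : r.comp i = ContinuousMap.id _ := by
      ext x : 2
      exact push_eq hσ v ((inf'_eq_zero hσ x.2.1).2 x.2.2.2.2)
    have hir : (i.comp r).Homotopic (ContinuousMap.id _) := by
      refine ⟨⟨⟨fun p => ⟨fun a => (1 - (p.1 : ℝ)) * push σ hσ v p.2.1 a + p.1 * p.2.1 a, ?_⟩,
        ?_⟩, ?_, ?_⟩⟩
      · obtain ⟨t, x, hx⟩ := p
        obtain ⟨h0, h1, h2⟩ := hx
        obtain ⟨h0', h1', h2'⟩ := hpush x ⟨h0, h1, h2⟩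
        by_cases hc : σ ⊆ suppF x
        · refine segment_mem hK (h _ h2 hc) h0' h0 h1' h1 ?_ (Finset.subset_insert _ _) t
          have := hsub x
          rwa [Finset.union_eq_left.2 hc] at this
        · refine segment_mem hK h2 h0' h0 h1' h1 ?_ subset_rfl t
          rw [push_eq hσ v ((inf'_eq_zero hσ h0).2 hc)]
      · refine Continuous.subtype_mk (continuous_pi fun a => ?_) _
        have h1 := continuous_push σ hσ v
        have h2 : Continuous fun p : unitInterval × Geo K => push σ hσ v p.2.1 a :=
          (continuous_apply a).comp (h1.comp (continuous_subtype_val.comp continuous_snd))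
        have h3 : Continuous fun p : unitInterval × Geo K => p.2.1 a :=
          (continuous_apply a).comp (continuous_subtype_val.comp continuous_snd)
        have h4 : Continuous fun p : unitInterval × Geo K => (p.1 : ℝ) := by fun_prop
        exact ((continuous_const.sub h4).mul h2).add (h4.mul h3)
      · intro x
        refine Subtype.ext ?_
        funext a
        simp [i, r]
      · intro x
        refine Subtype.ext ?_
        funext a
        simp
    exact (ContinuousMap.HomotopyEquiv.mk r i hir (hri ▸ ContinuousMap.Homotopic.refl _)).contractibleSpace

omit [DecidableEq α] in
theorem isClosed_Geo {K : Set (Finset α)} (hK : DownClosed K) : IsClosed (Geo K) := by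
  have e : Geo K = {x : α → ℝ | ∀ a, 0 ≤ x a} ∩ {x : α → ℝ | ∑ a, x a = 1} ∩
      ⋃ s ∈ K, {x : α → ℝ | ∀ a, a ∉ s → x a = 0} := by
    ext x
    simp only [Geo, Set.mem_ofPred_eq, Set.mem_inter_iff, Set.mem_iUnion, and_assoc,
      exists_prop]
    refine and_congr_right fun _ => and_congr_right fun _ => ⟨fun h => ⟨_, h, fun a ha => ?_⟩, ?_⟩
    · by_contra hc; exact ha ((mem_suppF x a).2 hc)
    · rintro ⟨s, hs, h⟩
      refine hK s hs _ fun a ha => ?_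
      by_contra hc
      exact (mem_suppF x a).1 ha (h a hc)
  rw [e]
  refine (IsClosed.inter ?_ ?_).inter ?_
  · simp only [Set.ofPred_forall]
    exact isClosed_iInter fun a => isClosed_le continuous_const (continuous_apply a)
  · exact isClosed_eq (by fun_prop) continuous_const
  · refine (Set.toFinite K).isClosed_biUnion fun s _ => ?_
    simp only [Set.ofPred_forall]
    exact isClosed_iInter fun a => isClosed_iInter fun _ =>
      isClosed_eq (continuous_apply a) continuous_const

omit [DecidableEq α] in
theorem isCompact_Geo {K : Set (Finset α)} (hK : DownClosed K) : IsCompact (Geo K) := by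
  refine IsCompact.of_isClosed_subset (isCompact_univ_pi fun _ : α => isCompact_Icc (a := (0:ℝ)) (b := 1))
    (isClosed_Geo hK) ?_
  rintro x ⟨h0, h1, _⟩ a _
  exact ⟨h0 a, h1 ▸ Finset.single_le_sum (fun b _ => h0 b) (Finset.mem_univ a)⟩

end Geometric

/-! ### Quotients by contractible subspaces -/

section Collapsing

/-- If a homotopy of the compact space `K` starting at the identity preserves `X` and ends by contracting
`X` to a point, then the quotient map `q` collapsing `X` is a homotopy equivalence: the end of the
homotopy descends to a homotopy inverse, and the homotopy itself descends to `W`. -/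
theorem homotopyEquiv_of_collapse {K W : Type*} [TopologicalSpace K] [CompactSpace K]
    [TopologicalSpace W] [T2Space W] (X : Set K) (H : C(unitInterval × K, K))
    (h0 : ∀ x, H (0, x) = x) (hX : ∀ t, ∀ x ∈ X, H (t, x) ∈ X) (p : K)
    (h1 : ∀ x ∈ X, H (1, x) = p) (q : C(K, W)) (hq : Function.Surjective q)
    (hqX : ∀ x y, q x = q y ↔ x = y ∨ (x ∈ X ∧ y ∈ X)) :
    Nonempty (ContinuousMap.HomotopyEquiv K W) := by
  -- surjections from compact spaces to Hausdorff spaces are quotient maps, also after `I × _`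
  have Q : Topology.IsQuotientMap q :=
    q.continuous.isClosedMap.isQuotientMap q.continuous hq
  let q' : C(unitInterval × K, unitInterval × W) :=
    ⟨Prod.map id q, continuous_id.prodMap q.continuous⟩
  have Q' : Topology.IsQuotientMap q' :=
    q'.continuous.isClosedMap.isQuotientMap q'.continuous
      (Function.surjective_id.prodMap hq)
  let H1 : C(K, K) := ⟨fun x => H (1, x), by fun_prop⟩
  have hH1 : Function.FactorsThrough H1 q := by
    intro x y hxy
    rcases (hqX x y).1 hxy with rfl | ⟨hx, hy⟩
    · rfl
    · exact (h1 x hx).trans (h1 y hy).symm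
  have hG : Function.FactorsThrough (q.comp H) q' := by
    rintro ⟨s, x⟩ ⟨t, y⟩ hxy
    obtain ⟨rfl, h2⟩ : s = t ∧ q x = q y := by simpa [q'] using hxy
    rcases (hqX x y).1 h2 with rfl | ⟨hx, hy⟩
    · rfl
    · exact (hqX _ _).2 (Or.inr ⟨hX s x hx, hX s y hy⟩)
  let g : C(W, K) := Q.lift H1 hH1
  have hg : ∀ x, g (q x) = H (1, x) := fun x => congrArg (fun f => f x) (Q.lift_comp H1 hH1)
  let G : C(unitInterval × W, W) := Q'.lift (q.comp H) hG
  have hG' : ∀ t x, G (t, q x) = q (H (t, x)) := fun t x =>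
    congrArg (fun f => f (t, x)) (Q'.lift_comp (q.comp H) hG)
  refine ⟨⟨q, g, ?_, ?_⟩⟩
  · refine ContinuousMap.Homotopic.symm ⟨⟨H, h0, fun x => (hg x).symm⟩⟩
  · refine ContinuousMap.Homotopic.symm ⟨⟨G, fun w => ?_, fun w => ?_⟩⟩
    · obtain ⟨x, rfl⟩ := hq w
      simp [hG', h0]
    · obtain ⟨x, rfl⟩ := hq w
      simp [hG', hg]

end Collapsing

/-! ### Extending the contraction of a subcomplex -/

section Extension
variable {α : Type*} [Fintype α]

/-- The smallest coordinate of `x` on `c`, and `0` for `c = ∅`. -/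
noncomputable def minCoord {α : Type*} (c : Finset α) (x : α → ℝ) : ℝ :=
  if h : c.Nonempty then c.inf' h x else 0

omit [Fintype α] in
theorem continuous_minCoord (c : Finset α) : Continuous (minCoord c) := by
  unfold minCoord
  split_ifs with h
  · exact continuous_inf' c h
  · exact continuous_const

omit [Fintype α] in
theorem minCoord_nonneg (c : Finset α) {x : α → ℝ} (hx : ∀ a, 0 ≤ x a) : 0 ≤ minCoord c x := by
  unfold minCoord
  split_ifs with h
  · exact Finset.le_inf' _ _ fun b _ => hx b
  · exact le_rfl

omit [Fintype α] in
theorem minCoord_le {c : Finset α} (x : α → ℝ) {a : α} (ha : a ∈ c) : minCoord c x ≤ x a := by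
  rw [minCoord, dif_pos ⟨a, ha⟩]
  exact Finset.inf'_le _ ha

omit [Fintype α] in
theorem exists_minCoord_eq {c : Finset α} (hc : c.Nonempty) (x : α → ℝ) :
    ∃ a ∈ c, x a = minCoord c x := by
  rw [minCoord, dif_pos hc]
  obtain ⟨a, ha, h⟩ := Finset.exists_mem_eq_inf' hc x
  exact ⟨a, ha, h.symm⟩

/-- `C` is a family of `N`-element members of `A`, where `N` bounds the size of members of `A`. -/
structure TopFam (A : Set (Finset α)) (C : Finset (Finset α)) (N : ℕ) : Prop where
  pos : 0 < N
  down : DownClosed A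
  le : ∀ s ∈ A, s.card ≤ N
  sub : ∀ c ∈ C, c ∈ A
  card : ∀ c ∈ C, c.card = N

variable {A : Set (Finset α)} {C : Finset (Finset α)} {N : ℕ}

omit [Fintype α] in
theorem TopFam.nonempty (h : TopFam A C N) {c : Finset α} (hc : c ∈ C) : c.Nonempty := by
  rw [← Finset.card_pos, h.card c hc]; exact h.pos

theorem TopFam.minCoord_pos (h : TopFam A C N) {c : Finset α} (hc : c ∈ C) {x : α → ℝ} (hx : x ∈ Geo A) :
    0 < minCoord c x ↔ suppF x = c := by
  constructor
  · intro h0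
    have : c ⊆ suppF x := fun a ha => (mem_suppF x a).2 (h0.trans_le (minCoord_le x ha)).ne'
    exact (Finset.eq_of_subset_of_card_le this (by rw [h.card c hc]; exact h.le _ hx.2.2)).symm
  · intro he
    obtain ⟨a, ha, h1⟩ := exists_minCoord_eq (h.nonempty hc) x
    rw [← h1]
    rw [← he, mem_suppF] at ha
    exact lt_of_le_of_ne (hx.1 a) ha.symm

theorem TopFam.minCoord_zero (h : TopFam A C N) {c : Finset α} (hc : c ∈ C) {x : α → ℝ} (hx : x ∈ Geo A)
    (hne : suppF x ≠ c) : minCoord c x = 0 := by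
  by_contra hc'
  exact hne ((h.minCoord_pos hc hx).1 (lt_of_le_of_ne (minCoord_nonneg c hx.1) (Ne.symm hc')))

omit [Fintype α] in
theorem TopFam.down_sdiff (h : TopFam A C N) : DownClosed (A \ C) := by
  rintro s ⟨hs, hsC⟩ t hts
  refine ⟨h.down s hs t hts, fun ht => hsC ?_⟩
  have h1 := h.card t ht
  rwa [← Finset.eq_of_subset_of_card_le hts (by rw [h1]; exact h.le s hs)]

variable [DecidableEq α]

/-- For every `c ∈ C`, the smallest coordinate on `c`, truncated at `s`, is subtracted from all
coordinates in `c`, and the result is rescaled to total mass `1`. This pushes a neighbourhood of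
`Geo (A \ C)` radially onto `Geo (A \ C)`, away from the barycentres of the facets in `C`. -/
noncomputable def shave (C : Finset (Finset α)) (N : ℕ) (s : ℝ) (x : α → ℝ) : α → ℝ := fun a =>
  (x a - ∑ c ∈ C, if a ∈ c then min (minCoord c x) s else 0) / (1 - N * ∑ c ∈ C, min (minCoord c x) s)

theorem shave_eq (h : TopFam A C N) {x : α → ℝ} (hx : x ∈ Geo (A \ C)) {s : ℝ} (hs : 0 ≤ s) :
    shave C N s x = x := by
  have h1 : ∀ c ∈ C, min (minCoord c x) s = 0 := fun c hc => by
    rw [h.minCoord_zero hc ⟨hx.1, hx.2.1, hx.2.2.1⟩ (by rintro rfl; exact hx.2.2.2 hc), min_eq_left hs]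
  funext a
  rw [shave, Finset.sum_eq_zero h1, Finset.sum_eq_zero fun c hc => by simp [h1 c hc]]
  simp

theorem shave_zero {x : α → ℝ} (hx : x ∈ Geo A) :
    shave C N 0 x = x := by
  have h1 : ∀ c ∈ C, min (minCoord c x) 0 = 0 := fun c hc => by
    rw [min_eq_right (minCoord_nonneg c hx.1)]
  funext a
  rw [shave, Finset.sum_eq_zero h1, Finset.sum_eq_zero fun c hc => by simp [h1 c hc]]
  simp

theorem shave_of_mem (h : TopFam A C N) {x : α → ℝ} (hx : x ∈ Geo A) (hc : suppF x ∈ C) {s : ℝ}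
    (hs : 0 ≤ s) (a : α) : shave C N s x a =
      (x a - if a ∈ suppF x then min (minCoord (suppF x) x) s else 0) /
        (1 - N * min (minCoord (suppF x) x) s) := by
  have h1 : ∀ c ∈ C, c ≠ suppF x → min (minCoord c x) s = 0 := fun c hc hne => by
    rw [h.minCoord_zero hc hx hne.symm, min_eq_left hs]
  rw [shave, Finset.sum_eq_single_of_mem _ hc h1,
    Finset.sum_eq_single_of_mem _ hc fun c hc hne => by simp [h1 c hc hne]]

omit [Fintype α] [DecidableEq α] in
theorem denom_pos (h : TopFam A C N) (m : ℝ) {s : ℝ} (hs : s ≤ 1 / (2 * N)) :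
    0 < 1 - N * min m s := by
  have hN : (0 : ℝ) < N := by exact_mod_cast h.pos
  have h1 : N * min m s ≤ N * (1 / (2 * N)) :=
    mul_le_mul_of_nonneg_left ((min_le_right _ _).trans hs) hN.le
  have h2 : (N : ℝ) * (1 / (2 * N)) = 1 / 2 := by field_simp
  linarith

theorem shave_mem (h : TopFam A C N) {x : α → ℝ} (hx : x ∈ Geo A) {s : ℝ}
    (hs : 0 ≤ s) (hs' : s ≤ 1 / (2 * N)) : shave C N s x ∈ Geo A := by
  by_cases hc : suppF x ∈ C
  · have hd := denom_pos h (minCoord (suppF x) x) hs'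
    have key := shave_of_mem h hx hc hs
    refine ⟨fun a => ?_, ?_, ?_⟩
    · rw [key a]
      refine div_nonneg ?_ hd.le
      split_ifs with ha
      · linarith [minCoord_le x ha, min_le_left (minCoord (suppF x) x) s]
      · linarith [hx.1 a]
    · simp_rw [key]
      rw [← Finset.sum_div, Finset.sum_sub_distrib, hx.2.1]
      have : ∑ a, (if a ∈ suppF x then min (minCoord (suppF x) x) s else 0)
          = N * min (minCoord (suppF x) x) s := by
        simp [h.card _ hc]
      rw [this, div_self hd.ne']
    · refine h.down _ hx.2.2 _ fun a ha => ?_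
      by_contra hc
      have h2 : x a = 0 := by rwa [mem_suppF, not_not] at hc
      exact (mem_suppF _ a).1 ha (by rw [key a, if_neg hc, h2]; simp)
  · rwa [shave_eq h ⟨hx.1, hx.2.1, hx.2.2, hc⟩ hs]

/-- Points whose smallest coordinate is at most `s` are pushed all the way to the boundary. -/
theorem shave_mem' (h : TopFam A C N) {x : α → ℝ} (hx : x ∈ Geo A) {s : ℝ}
    (hs : 0 ≤ s) (hs' : s ≤ 1 / (2 * N)) (hm : ∑ c ∈ C, minCoord c x ≤ s) :
    shave C N s x ∈ Geo (A \ C) := by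
  by_cases hc : suppF x ∈ C
  · have h1 := shave_mem h hx hs hs'
    refine ⟨h1.1, h1.2.1, h1.2.2, fun hC => ?_⟩
    have key := shave_of_mem h hx hc hs
    have hms : minCoord (suppF x) x ≤ s := 
      (Finset.single_le_sum (f := fun c => minCoord c x) (fun c _ => minCoord_nonneg c hx.1) hc).trans hm
    obtain ⟨b, hb, hb'⟩ := exists_minCoord_eq (h.nonempty hc) x
    have hsub : suppF (shave C N s x) ⊆ (suppF x).erase b := by
      intro a ha
      rw [Finset.mem_erase]
      constructor
      · rintro rfl
        exact (mem_suppF _ a).1 ha (by rw [key a, if_pos hb, min_eq_left hms, hb']; simp)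
      · by_contra hc
        have h2 : x a = 0 := by rwa [mem_suppF, not_not] at hc
        exact (mem_suppF _ a).1 ha (by rw [key a, if_neg hc, h2]; simp)
    have h3 := Finset.card_le_card hsub
    rw [Finset.card_erase_of_mem hb, h.card _ hc, h.card _ hC] at h3
    have := h.pos
    omega
  · have h2 : x ∈ Geo (A \ C) := ⟨hx.1, hx.2.1, hx.2.2, hc⟩
    rwa [shave_eq h h2 hs]

theorem continuous_shave (h : TopFam A C N) :
    Continuous fun p : unitInterval × Geo A => shave C N (p.1 * (1 / (2 * N))) p.2.1 := by
  have hs : ∀ t : unitInterval, (t : ℝ) * (1 / (2 * N)) ≤ 1 / (2 * N) := fun t =>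
    mul_le_of_le_one_left (by positivity) t.2.2
  have hs0 : ∀ t : unitInterval, 0 ≤ (t : ℝ) * (1 / (2 * N)) := fun t =>
    mul_nonneg t.2.1 (by positivity)
  have hmin : ∀ c : Finset α, Continuous fun p : unitInterval × Geo A =>
      min (minCoord c p.2.1) (p.1 * (1 / (2 * N))) := fun c =>
    ((continuous_minCoord c).comp (continuous_subtype_val.comp continuous_snd)).min
      (by fun_prop)
  refine continuous_pi fun a => ?_
  unfold shave
  refine Continuous.div ?_ ?_ ?_
  · refine Continuous.sub ?_ (continuous_finsetSum _ fun c _ => ?_)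
    · exact (continuous_apply a).comp (continuous_subtype_val.comp continuous_snd)
    · split_ifs
      · exact hmin c
      · exact continuous_const
  · exact continuous_const.sub (continuous_const.mul (continuous_finsetSum _ fun c _ => hmin c))
  · rintro ⟨t, x, hx⟩
    by_cases hc : suppF x ∈ C
    · have h1 : ∀ c ∈ C, c ≠ suppF x → min (minCoord c x) (t * (1 / (2 * N))) = 0 :=
        fun c hc hne => by rw [h.minCoord_zero hc hx hne.symm, min_eq_left (hs0 t)]
      simp only
      rw [Finset.sum_eq_single_of_mem _ hc h1]
      exact (denom_pos h _ (hs t)).ne'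
    · have h1 : ∀ c ∈ C, min (minCoord c x) (t * (1 / (2 * N))) = 0 := fun c hc' => by
        rw [h.minCoord_zero hc' hx (by rintro rfl; exact hc hc'), min_eq_left (hs0 t)]
      simp only
      rw [Finset.sum_eq_zero h1]
      simp

/-- The homotopy extension property for `Geo (A \ C) ⊆ Geo A`, applied to a contraction `F` of the
subcomplex. With `f` a Tietze extension of `F` to the ambient vector space, a point is first pushed
by `z` towards the subcomplex, and only after arriving there does it start to follow `F`, with a clock
`τ` that stays at `0` until then; so the values of `f` outside the subcomplex never contribute. -/
theorem exists_homotopy (h : TopFam A C N) [ContractibleSpace (Geo (A \ C))] :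
    ∃ (H : C(unitInterval × Geo A, Geo A)) (p : Geo A), (∀ x, H (0, x) = x) ∧
      (∀ t, ∀ x : Geo A, suppF x.1 ∉ C → suppF (H (t, x)).1 ∉ C) ∧
      ∀ x : Geo A, suppF x.1 ∉ C → H (1, x) = p := by
  obtain ⟨p, ⟨F⟩⟩ := id_nullhomotopic (Geo (A \ C))
  have hN : (0 : ℝ) < N := by exact_mod_cast h.pos
  have hs : ∀ t : unitInterval, (t : ℝ) * (1 / (2 * N)) ≤ 1 / (2 * N) := fun t =>
    mul_le_of_le_one_left (by positivity) t.2.2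
  have hs0 : ∀ t : unitInterval, 0 ≤ (t : ℝ) * (1 / (2 * N)) := fun t =>
    mul_nonneg t.2.1 (by positivity)
  have he : Topology.IsClosedEmbedding
      (Prod.map id Subtype.val : unitInterval × Geo (A \ C) → unitInterval × (α → ℝ)) :=
    Topology.IsClosedEmbedding.id.prodMap (isClosed_Geo h.down_sdiff).isClosedEmbedding_subtypeVal
  obtain ⟨f, hf⟩ := ContinuousMap.exists_extension he
    (⟨fun q => (F q).1, by fun_prop⟩ : C(unitInterval × Geo (A \ C), α → ℝ))
  have hf' : ∀ (t : unitInterval) (x : α → ℝ) (hx : x ∈ Geo (A \ C)),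
      f (t, x) = (F (t, ⟨x, hx⟩)).1 := fun t x hx =>
    congrArg (fun g => g (t, ⟨x, hx⟩)) hf
  let z : unitInterval × Geo A → (α → ℝ) := fun q => shave C N (q.1 * (1 / (2 * N))) q.2.1
  let m : unitInterval × Geo A → ℝ := fun q => ∑ c ∈ C, minCoord c q.2.1
  have hz : Continuous z := continuous_shave h
  have hm : Continuous m := continuous_finsetSum _ fun c _ =>
    (continuous_minCoord c).comp (continuous_subtype_val.comp continuous_snd)
  have hm0 : ∀ q, 0 ≤ m q := fun q => Finset.sum_nonneg fun c _ => minCoord_nonneg c q.2.2.1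
  let τ : unitInterval × Geo A → unitInterval := fun q =>
    Set.projIcc 0 1 zero_le_one ((q.1 : ℝ) - 2 * N * m q)
  have hτ : Continuous τ := continuous_projIcc.comp (by fun_prop)
  let Φ : unitInterval × Geo A → (α → ℝ) := fun q => z q + f (τ q, z q) - f (0, z q)
  have hΦ : Continuous Φ := by fun_prop
  have hΦ1 : ∀ q, τ q = 0 → Φ q = z q := fun q hq => by simp [Φ, hq]
  have hzX : ∀ q, m q ≤ q.1 * (1 / (2 * N)) → z q ∈ Geo (A \ C) := fun q hq =>
    shave_mem' h q.2.2 (hs0 _) (hs _) hq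
  have hΦ2 : ∀ q (hq : z q ∈ Geo (A \ C)), Φ q = (F (τ q, ⟨z q, hq⟩)).1 := fun q hq => by
    simp only [Φ]
    rw [hf' _ _ hq, hf' _ _ hq]
    simp
  -- either the clock has not started or the point has already reached the subcomplex
  have hcase : ∀ q, τ q = 0 ∨ z q ∈ Geo (A \ C) := by
    intro q
    rcases le_total (q.1 : ℝ) (2 * N * m q) with hle | hle
    · left
      exact Set.projIcc_of_le_left _ (by linarith)
    · right
      refine hzX q ?_
      rw [mul_one_div, le_div_iff₀ (by positivity)]
      linarith
  have hsub : Geo (A \ C) ⊆ Geo A := fun x hx => ⟨hx.1, hx.2.1, hx.2.2.1⟩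
  have hΦA : ∀ q, Φ q ∈ Geo A := fun q => by
    rcases hcase q with h1 | h1
    · rw [hΦ1 q h1]
      exact shave_mem h q.2.2 (hs0 _) (hs _)
    · rw [hΦ2 q h1]
      exact hsub (F _).2
  have hX : ∀ (t : unitInterval) (x : Geo A) (hx : suppF x.1 ∉ C),
      Φ (t, x) = (F (t, ⟨x.1, x.2.1, x.2.2.1, x.2.2.2, hx⟩)).1 := by
    intro t x hx
    have hx' : x.1 ∈ Geo (A \ C) := ⟨x.2.1, x.2.2.1, x.2.2.2, hx⟩
    have hzx : z (t, x) = x.1 := shave_eq h hx' (hs0 _)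
    have hmx : m (t, x) = 0 := Finset.sum_eq_zero fun c hc =>
      h.minCoord_zero hc x.2 (by rintro rfl; exact hx hc)
    have hτx : τ (t, x) = t := by
      simp [τ, hmx]
    have hq : z (t, x) ∈ Geo (A \ C) := by rw [hzx]; exact hx'
    rw [hΦ2 _ hq, hτx]
    congr 3
    exact Subtype.ext hzx
  refine ⟨⟨fun q => ⟨Φ q, hΦA q⟩, hΦ.subtype_mk _⟩, ⟨p.1, hsub p.2⟩, ?_, ?_, ?_⟩
  · intro x
    refine Subtype.ext ?_
    have h1 : τ (0, x) = 0 := Set.projIcc_of_le_left _ (by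
      have := hm0 (0, x)
      have : 0 ≤ 2 * N * m (0, x) := by positivity
      simpa using this)
    refine (hΦ1 _ h1).trans ?_
    simp only [z]
    rw [Set.Icc.coe_zero, zero_mul]
    exact shave_zero x.2
  · intro t x hx
    have := hX t x hx
    simp only [ContinuousMap.coe_mk]
    rw [this]
    exact (F _).2.2.2.2
  · intro x hx
    refine Subtype.ext ?_
    refine (hX 1 x hx).trans ?_
    simp

end Extension

/-! ### Maps to spheres and wedges of spheres -/

section Wedge

/-- An open subset `U` homeomorphic to `ℝ^d` gives a map to the sphere `S^d`, which is the one-point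
compactification of `ℝ^d`, by sending the complement of `U` to the base point. -/
theorem exists_collapse_sphere {K : Type*} [TopologicalSpace K] [T2Space K] {U : Set K}
    (hU : IsOpen U) {d : ℕ} (e : U ≃ₜ (Fin d → ℝ)) :
    ∃ φ : C(K, Metric.sphere (0 : EuclideanSpace ℝ (Fin (d + 1))) 1),
      (∀ x, φ x = spherePt d ↔ x ∉ U) ∧ Set.InjOn φ U ∧
      ∀ s, s ≠ spherePt d → ∃ x ∈ U, φ x = s := by
  classical
  let v : EuclideanSpace ℝ (Fin (d + 1)) := EuclideanSpace.single 0 1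
  have hv : ‖v‖ = 1 := by simp [v]
  have hv₀ : v ≠ 0 := fun contra => by simp [contra] at hv
  have : Fact (Module.finrank ℝ (EuclideanSpace ℝ (Fin (d + 1))) = d + 1) := ⟨by simp⟩
  have hV : Module.finrank ℝ (Fin d → ℝ) = Module.finrank ℝ (ℝ ∙ v)ᗮ := by
    rw [Submodule.finrank_orthogonal_span_singleton (n := d) hv₀]; simp
  let l : (Fin d → ℝ) ≃ₜ (ℝ ∙ v)ᗮ :=
    (FiniteDimensional.nonempty_continuousLinearEquiv_of_finrank_eq hV).some.toHomeomorph
  let h : U ≃ₜ (ℝ ∙ v)ᗮ := e.trans l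
  let S := onePointHyperplaneHomeoUnitSphere hv
  have hS : S OnePoint.infty = spherePt d := rfl
  let f : K → OnePoint (ℝ ∙ v)ᗮ := fun x => if hx : x ∈ U then ↑(h ⟨x, hx⟩) else OnePoint.infty
  have hfU : ∀ x (hx : x ∈ U), f x = ↑(h ⟨x, hx⟩) := fun x hx => dif_pos hx
  have hfU' : ∀ x, x ∉ U → f x = OnePoint.infty := fun x hx => dif_neg hx
  have hf : Continuous f := by
    refine continuous_def.2 fun s hs => ?_
    rw [OnePoint.isOpen_def] at hs
    by_cases hinf : OnePoint.infty ∈ s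
    · rw [← isClosed_compl_iff]
      have : (f ⁻¹' s)ᶜ = Subtype.val '' (h.symm '' ((↑) ⁻¹' s : Set (ℝ ∙ v)ᗮ)ᶜ) := by
        ext x
        constructor
        · intro hx
          by_cases hxU : x ∈ U
          · refine ⟨⟨x, hxU⟩, ⟨h ⟨x, hxU⟩, ?_, by simp⟩, rfl⟩
            intro hc
            exact hx (by rw [Set.mem_preimage, hfU x hxU]; exact hc)
          · exact absurd (show f x ∈ s by rw [hfU' x hxU]; exact hinf) hx
        · rintro ⟨_, ⟨y, hy, rfl⟩, rfl⟩ hc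
          rw [Set.mem_preimage, hfU _ (h.symm y).2] at hc
          exact hy (by simpa using hc)
      rw [this]
      exact (((hs.1 hinf).image h.symm.continuous).image continuous_subtype_val).isClosed
    · have : f ⁻¹' s = Subtype.val '' (h ⁻¹' ((↑) ⁻¹' s : Set (ℝ ∙ v)ᗮ)) := by
        ext x
        constructor
        · intro hx
          by_cases hxU : x ∈ U
          · rw [Set.mem_preimage, hfU x hxU] at hx
            exact ⟨⟨x, hxU⟩, hx, rfl⟩
          · rw [Set.mem_preimage, hfU' x hxU] at hx
            exact absurd hx hinf
        · rintro ⟨⟨x, hx⟩, hy, rfl⟩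
          rw [Set.mem_preimage, hfU x hx]
          exact hy
      rw [this]
      exact hU.isOpenMap_subtype_val _ (hs.2.preimage h.continuous)
  refine ⟨⟨fun x => S (f x), S.continuous.comp hf⟩, fun x => ?_, ?_, fun s hs => ?_⟩
  · rw [← hS]
    refine S.injective.eq_iff.trans ?_
    by_cases hx : x ∈ U
    · simp [hfU x hx, hx]
    · simp [hfU' x hx, hx]
  · intro x hx y hy hxy
    have h1 : f x = f y := S.injective hxy
    rw [hfU x hx, hfU y hy] at h1
    simpa using h1
  · have h1 : S.symm s ≠ OnePoint.infty := fun hc => hs (by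
      rw [← hS, ← hc]; simp)
    obtain ⟨y, hy⟩ := OnePoint.ne_infty_iff_exists.1 h1
    refine ⟨(h.symm y).1, (h.symm y).2, ?_⟩
    have h2 : f (h.symm y).1 = ↑y := by rw [hfU _ (h.symm y).2]; simp
    simp only [ContinuousMap.coe_mk]
    rw [h2, hy]
    simp

variable {m d : ℕ}

/-- The wedge point. -/
noncomputable def WedgeOfSpheres.base (m d : ℕ) : WedgeOfSpheres m d := Quot.mk _ (Sum.inl ())

/-- The inclusion of the `i`-th sphere. -/
noncomputable def WedgeOfSpheres.incl (i : Fin m)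
    (s : Metric.sphere (0 : EuclideanSpace ℝ (Fin (d + 1))) 1) : WedgeOfSpheres m d :=
  Quot.mk _ (Sum.inr (i, s))

theorem WedgeOfSpheres.incl_pt (i : Fin m) : incl i (spherePt d) = base m d :=
  Quot.sound ⟨rfl, trivial⟩

theorem WedgeOfSpheres.cases (w : WedgeOfSpheres m d) :
    w = base m d ∨ ∃ i s, s ≠ spherePt d ∧ w = incl i s := by
  induction w using Quot.ind with
  | mk a =>
    rcases a with u | ⟨i, s⟩
    · exact Or.inl rfl
    · by_cases hs : s = spherePt d
      · subst hs; exact Or.inl (incl_pt i)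
      · exact Or.inr ⟨i, s, hs, rfl⟩

/-- The inclusion of the wedge into the product of the spheres. It is a closed embedding, so that the
wedge is Hausdorff and continuity into the wedge can be checked on each sphere. -/
noncomputable def WedgeOfSpheres.toPi (w : WedgeOfSpheres m d) :
    Fin m → Metric.sphere (0 : EuclideanSpace ℝ (Fin (d + 1))) 1 :=
  Quot.lift (fun a => Sum.elim (fun _ _ => spherePt d)
    (fun p => Function.update (fun _ => spherePt d) p.1 p.2) a) (by
      have key : ∀ a, isWedgeBase m d a → (Sum.elim (fun _ _ => spherePt d)
          (fun p => Function.update (fun _ => spherePt d) p.1 p.2) a) = fun _ => spherePt d := by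
        rintro (_ | ⟨i, s⟩) h
        · rfl
        · obtain rfl : s = spherePt d := h
          exact Function.update_eq_self i _
      rintro a b ⟨ha, hb⟩
      rw [key a ha, key b hb]) w

theorem WedgeOfSpheres.toPi_base : toPi (base m d) = fun _ => spherePt d := rfl

theorem WedgeOfSpheres.toPi_incl (i : Fin m) (s) :
    toPi (incl i s : WedgeOfSpheres m d) = Function.update (fun _ => spherePt d) i s := rfl

theorem WedgeOfSpheres.continuous_mk :
    Continuous fun a => (Quot.mk _ a : WedgeOfSpheres m d) := continuous_quot_mk

theorem WedgeOfSpheres.continuous_toPi : Continuous (toPi (m := m) (d := d)) := by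
  refine continuous_quot_lift _ (Continuous.sumElim continuous_const ?_)
  rw [continuous_prod_of_discrete_left]
  exact fun i => continuous_const.update i continuous_id

theorem WedgeOfSpheres.injective_toPi : Function.Injective (toPi (m := m) (d := d)) := by
  intro w w' h
  rcases w.cases with rfl | ⟨i, s, hs, rfl⟩ <;> rcases w'.cases with rfl | ⟨j, t, ht, rfl⟩
  · rfl
  · have := congrFun h j
    simp only [toPi_base, toPi_incl, Function.update_self] at this
    exact absurd this.symm ht
  · have := congrFun h i
    simp only [toPi_base, toPi_incl, Function.update_self] at this
    exact absurd this hs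
  · have h1 := congrFun h i
    simp only [toPi_incl, Function.update_self] at h1
    by_cases hij : i = j
    · subst hij
      rw [Function.update_self] at h1
      rw [h1]
    · rw [Function.update_of_ne hij] at h1
      exact absurd h1 hs

instance : CompactSpace (WedgeOfSpheres m d) :=
  ⟨by
    have h := isCompact_range (WedgeOfSpheres.continuous_mk (m := m) (d := d))
    rwa [Set.range_eq_univ.2 Quot.mk_surjective] at h⟩

theorem WedgeOfSpheres.isClosedEmbedding_toPi :
    Topology.IsClosedEmbedding (toPi (m := m) (d := d)) :=
  continuous_toPi.isClosedEmbedding injective_toPi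

instance : T2Space (WedgeOfSpheres m d) :=
  WedgeOfSpheres.isClosedEmbedding_toPi.isEmbedding.t2Space

/-- Disjoint open cells `U i` give a map to the wedge of spheres that collapses their common complement
to the wedge point and is otherwise injective. -/
theorem exists_collapse_wedge {K : Type*} [TopologicalSpace K] [T2Space K] (U : Fin m → Set K)
    (hU : ∀ i, IsOpen (U i)) (hdis : ∀ i j x, x ∈ U i → x ∈ U j → i = j)
    (e : ∀ i, U i ≃ₜ (Fin d → ℝ)) (x₀ : K) (hx₀ : ∀ i, x₀ ∉ U i) :
    ∃ q : C(K, WedgeOfSpheres m d), Function.Surjective q ∧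
      ∀ x y, q x = q y ↔ x = y ∨ ((∀ i, x ∉ U i) ∧ ∀ i, y ∉ U i) := by
  classical
  choose φ h1 h2 h3 using fun i => exists_collapse_sphere (hU i) (e i)
  let q : K → WedgeOfSpheres m d := fun x =>
    if h : ∃ i, x ∈ U i then WedgeOfSpheres.incl h.choose (φ h.choose x)
    else WedgeOfSpheres.base m d
  have hq1 : ∀ i x, x ∈ U i → q x = WedgeOfSpheres.incl i (φ i x) := by
    intro i x hx
    have h : ∃ i, x ∈ U i := ⟨i, hx⟩
    have : h.choose = i := hdis _ _ x h.choose_spec hx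
    simp only [q]
    rw [dif_pos h, this]
  have hq2 : ∀ x, (∀ i, x ∉ U i) → q x = WedgeOfSpheres.base m d := fun x hx =>
    dif_neg (by push Not; exact hx)
  have hpi : ∀ x, (q x).toPi = fun i => φ i x := by
    intro x
    funext j
    by_cases h : ∃ i, x ∈ U i
    · obtain ⟨i, hi⟩ := h
      rw [hq1 i x hi, WedgeOfSpheres.toPi_incl]
      by_cases hij : j = i
      · subst hij; rw [Function.update_self]
      · rw [Function.update_of_ne hij]
        exact ((h1 j x).2 fun hc => hij (hdis _ _ x hc hi)).symm
    · push Not at h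
      rw [hq2 x h, WedgeOfSpheres.toPi_base]
      exact ((h1 j x).2 (h j)).symm
  have hqc : Continuous q := by
    rw [WedgeOfSpheres.isClosedEmbedding_toPi.isEmbedding.continuous_iff]
    have : WedgeOfSpheres.toPi ∘ q = fun x i => φ i x := funext hpi
    rw [this]
    fun_prop
  refine ⟨⟨q, hqc⟩, fun w => ?_, fun x y => ⟨fun hxy => ?_, ?_⟩⟩
  · rcases w.cases with rfl | ⟨i, s, hs, rfl⟩
    · exact ⟨x₀, hq2 _ hx₀⟩
    · obtain ⟨x, hx, rfl⟩ := h3 i s hs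
      exact ⟨x, hq1 i x hx⟩
  · have hφ : ∀ i, φ i x = φ i y := fun i => by
      have := congrArg WedgeOfSpheres.toPi (show q x = q y from hxy)
      rw [hpi, hpi] at this
      exact congrFun this i
    have hxU : ∀ i, x ∈ U i ↔ y ∈ U i := fun i => by
      rw [← not_iff_not, ← h1 i x, ← h1 i y, hφ i]
    by_cases h : ∃ i, x ∈ U i
    · obtain ⟨i, hi⟩ := h
      exact Or.inl (h2 i hi ((hxU i).1 hi) (hφ i))
    · push Not at h
      exact Or.inr ⟨h, fun i hc => h i ((hxU i).2 hc)⟩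
  · rintro (rfl | ⟨hx, hy⟩)
    · rfl
    · exact (hq2 x hx).trans (hq2 y hy).symm

end Wedge

/-! ### The open facets as cells -/

section Cell
variable {α : Type*} [Fintype α] [DecidableEq α]

/-- The point of the open simplex `c` whose coordinates at `e 0, …, e d` are proportional to
`exp 0, exp w₀, …, exp w_{d-1}`. -/
noncomputable def softmax {c : Finset α} {d : ℕ} (e : Fin (d + 1) ≃ c) (w : Fin d → ℝ) : α → ℝ :=
  fun a => if h : a ∈ c then
    Real.exp ((Fin.cons 0 w : Fin (d + 1) → ℝ) (e.symm ⟨a, h⟩)) /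
      ∑ j, Real.exp ((Fin.cons 0 w : Fin (d + 1) → ℝ) j)
  else 0

omit [Fintype α] in
theorem softmax_apply {c : Finset α} {d : ℕ} (e : Fin (d + 1) ≃ c) (w : Fin d → ℝ)
    (j : Fin (d + 1)) : softmax e w (e j) = Real.exp ((Fin.cons 0 w : Fin (d + 1) → ℝ) j) /
      ∑ j, Real.exp ((Fin.cons 0 w : Fin (d + 1) → ℝ) j) := by
  simp [softmax]

theorem expSum_pos {d : ℕ} (u : Fin d → ℝ) (j : Fin d) : 0 < ∑ j, Real.exp (u j) :=
  Finset.sum_pos (fun _ _ => Real.exp_pos _) ⟨j, Finset.mem_univ _⟩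

omit [Fintype α] in
theorem continuous_softmax {c : Finset α} {d : ℕ} (e : Fin (d + 1) ≃ c) :
    Continuous (softmax e) := by
  have hc : Continuous fun w : Fin d → ℝ => (Fin.cons 0 w : Fin (d + 1) → ℝ) := by
    refine continuous_pi fun j => ?_
    refine Fin.cases ?_ (fun i => ?_) j
    · simp only [Fin.cons_zero]; exact continuous_const
    · simp only [Fin.cons_succ]; exact continuous_apply i
  have hc' : ∀ j, Continuous fun w : Fin d → ℝ =>
      Real.exp ((Fin.cons 0 w : Fin (d + 1) → ℝ) j) := fun j =>
    Real.continuous_exp.comp ((continuous_apply j).comp hc)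
  refine continuous_pi fun a => ?_
  unfold softmax
  split_ifs with h
  · exact (hc' _).div (continuous_finsetSum _ fun j _ => hc' j)
      fun w => (expSum_pos _ 0).ne'
  · exact continuous_const

omit [DecidableEq α] in
theorem sum_eq_sum_equiv {c : Finset α} {d : ℕ} (e : Fin (d + 1) ≃ c) (x : α → ℝ)
    (hx : ∀ a, a ∉ c → x a = 0) : ∑ a, x a = ∑ j, x (e j) := by
  rw [e.sum_comp (fun a : c => x a), Finset.sum_coe_sort c x]
  exact (Finset.sum_subset (Finset.subset_univ c) fun a _ ha => hx a ha).symm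

theorem suppF_softmax {c : Finset α} {d : ℕ} (e : Fin (d + 1) ≃ c) (w : Fin d → ℝ) :
    suppF (softmax e w) = c := by
  ext a
  rw [mem_suppF]
  by_cases h : a ∈ c
  · simp [softmax, h, (expSum_pos (Fin.cons 0 w : Fin (d + 1) → ℝ) 0).ne']
  · simp [softmax, h]

theorem softmax_mem {A : Set (Finset α)} {c : Finset α} (hc : c ∈ A) {d : ℕ}
    (e : Fin (d + 1) ≃ c) (w : Fin d → ℝ) : softmax e w ∈ Geo A := by
  refine ⟨fun a => ?_, ?_, by rwa [suppF_softmax]⟩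
  · unfold softmax
    split_ifs
    · positivity
    · exact le_rfl
  · rw [sum_eq_sum_equiv e _ fun a ha => by simp [softmax, ha]]
    simp_rw [softmax_apply]
    rw [← Finset.sum_div, div_self (expSum_pos _ 0).ne']

/-- The open simplex spanned by `c` is homeomorphic to `ℝ^d`, through logarithms of ratios of
barycentric coordinates. -/
noncomputable def cellHomeo {A : Set (Finset α)} {c : Finset α} (hc : c ∈ A) {d : ℕ}
    (e : Fin (d + 1) ≃ c) : {x : Geo A | suppF x.1 = c} ≃ₜ (Fin d → ℝ) where
  toFun x := fun i => Real.log (x.1.1 (e i.succ)) - Real.log (x.1.1 (e 0))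
  invFun w := ⟨⟨softmax e w, softmax_mem hc e w⟩, suppF_softmax e w⟩
  left_inv := by
    rintro ⟨⟨x, hx⟩, hxc⟩
    have hxc : suppF x = c := hxc
    have hpos : ∀ j, 0 < x (e j) := fun j => by
      refine lt_of_le_of_ne (hx.1 _) (Ne.symm ((mem_suppF x _).1 ?_))
      rw [hxc]; exact (e j).2
    have hoff : ∀ a, a ∉ c → x a = 0 := fun a ha => by
      by_contra h
      exact ha (hxc ▸ (mem_suppF x a).2 h)
    have h1 : ∀ j, Real.exp ((Fin.cons 0 (fun i : Fin d => Real.log (x (e i.succ)) -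
        Real.log (x (e 0))) : Fin (d + 1) → ℝ) j) = x (e j) / x (e 0) := by
      intro j
      refine Fin.cases ?_ (fun i => ?_) j
      · rw [Fin.cons_zero, Real.exp_zero, div_self (hpos 0).ne']
      · rw [Fin.cons_succ, Real.exp_sub, Real.exp_log (hpos _), Real.exp_log (hpos _)]
    refine Subtype.ext (Subtype.ext ?_)
    funext a
    by_cases ha : a ∈ c
    · obtain ⟨j, hj⟩ := e.surjective ⟨a, ha⟩
      have hj' : a = e j := by rw [hj]
      rw [hj']
      refine (softmax_apply e _ j).trans ?_
      simp_rw [h1]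
      rw [← Finset.sum_div, ← sum_eq_sum_equiv e x hoff, hx.2.1]
      have := (hpos 0).ne'
      field_simp
    · simp [softmax, ha, hoff a ha]
  right_inv w := by
    funext i
    simp only [softmax_apply]
    have hZ := (expSum_pos (Fin.cons 0 w : Fin (d + 1) → ℝ) 0).ne'
    rw [Real.log_div (Real.exp_pos _).ne' hZ, Real.log_div (Real.exp_pos _).ne' hZ]
    simp
  continuous_toFun := by
    refine continuous_pi fun i => ?_
    have hj : ∀ j, Continuous fun x : {x : Geo A | suppF x.1 = c} => Real.log (x.1.1 (e j)) := by
      intro j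
      refine Continuous.log ?_ ?_
      · exact (continuous_apply _).comp (continuous_subtype_val.comp continuous_subtype_val)
      · rintro ⟨x, hx⟩
        refine (mem_suppF x.1 _).1 ?_
        rw [show suppF x.1 = c from hx]; exact (e j).2
    exact (hj _).sub (hj _)
  continuous_invFun := ((continuous_softmax e).subtype_mk _).subtype_mk _

omit [DecidableEq α] in
theorem TopFam.isOpen {A : Set (Finset α)} {C : Finset (Finset α)} {N : ℕ} (h : TopFam A C N)
    {c : Finset α} (hc : c ∈ C) : IsOpen {x : Geo A | suppF x.1 = c} := by
  have : {x : Geo A | suppF x.1 = c} = {x : Geo A | 0 < minCoord c x.1} := by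
    ext x
    exact (h.minCoord_pos hc x.2).symm
  rw [this]
  exact isOpen_lt continuous_const ((continuous_minCoord c).comp continuous_subtype_val)

/-- If deleting the facets in `C`, all of top dimension `d`, leaves a contractible complex, then the
complex is a wedge of `|C|` spheres of dimension `d`, up to homotopy. -/
theorem TopFam.homotopyEquiv {A : Set (Finset α)} {C : Finset (Finset α)} {d : ℕ}
    (h : TopFam A C (d + 1)) (hK : ContractibleSpace (Geo (A \ C))) :
    Nonempty (ContinuousMap.HomotopyEquiv (Geo A) (WedgeOfSpheres C.card d)) := by
  obtain ⟨H, p, h0, hX, h1⟩ := exists_homotopy h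
  have : CompactSpace (Geo A) := isCompact_iff_compactSpace.1 (isCompact_Geo h.down)
  obtain ⟨x₀⟩ : Nonempty (Geo (A \ C)) := inferInstance
  let E : Fin C.card ≃ C := C.equivFin.symm
  obtain ⟨q, hq, hq'⟩ := exists_collapse_wedge
    (fun i : Fin C.card => {x : Geo A | suppF x.1 = (E i).1})
    (fun i => h.isOpen (E i).2)
    (fun i j x hi hj => E.injective (Subtype.ext ((Eq.symm hi).trans hj)))
    (fun i => cellHomeo (h.sub _ (E i).2) ((E i).1.equivFinOfCardEq (h.card _ (E i).2)).symm)
    (⟨x₀.1, x₀.2.1, x₀.2.2.1, x₀.2.2.2.1⟩ : Geo A)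
    (fun i hi => x₀.2.2.2.2 (by
      rw [show suppF x₀.1 = (E i).1 from hi]; exact (E i).2))
  have hU : ∀ x : Geo A, (∀ i, x ∉ {x : Geo A | suppF x.1 = (E i).1}) ↔ suppF x.1 ∉ C := by
    intro x
    constructor
    · intro hx hc
      exact hx (E.symm ⟨_, hc⟩) (by simp)
    · intro hx i hi
      exact hx (by rw [show suppF x.1 = (E i).1 from hi]; exact (E i).2)
  refine homotopyEquiv_of_collapse {x : Geo A | suppF x.1 ∉ C} H h0 hX p h1 q hq fun x y => ?_
  rw [hq', hU, hU]
  rfl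

end Cell

/-- For integers `n ≥ 1` and `2 ≤ k ≤ n`, the order complex of the poset of ordered partial
partitions of `[n]` with exactly `k` parts has the homotopy type of a wedge of spheres of
dimension `n - k`. -/
theorem orderComplex_OPP_homotopyEquiv_wedgeOfSpheres (n k : ℕ)
    (hn : 1 ≤ n) (hk2 : 2 ≤ k) (hk : k ≤ n) :
    ∃ m : ℕ, Nonempty
      (ContinuousMap.HomotopyEquiv (orderComplex (OPP n k)) (WedgeOfSpheres m (n - k))) := by
  classical
  have hcard : ∀ c ∈ Ch (Set.univ : Set (OPP n k)), c.card ≤ n - k + 1 := fun c hc =>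
    OPP.chain_card n k hk c hc.2
  obtain ⟨h, -⟩ | ⟨C, hCA, hC, hcoll⟩ := (good_OPP n k hk).coll hcard
  · omega
  obtain ⟨C, rfl⟩ := C.toFinite.exists_finset_coe
  have hT : TopFam (Ch (Set.univ : Set (OPP n k))) C (n - k + 1) :=
    ⟨by omega, fun s hs t hts => Ch.down hts hs, hcard, fun c hc => hCA hc, fun c hc => hC c hc⟩
  have hK := hcoll.contractible hT.down_sdiff
  have hgeo : orderComplex (OPP n k) = Geo (Ch (Set.univ : Set (OPP n k))) := by
    ext x
    refine and_congr_right fun _ => and_congr_right fun _ => ?_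
    have : ((suppF x : Finset (OPP n k)) : Set (OPP n k)) = {a | x a ≠ 0} := by
      ext a; exact mem_suppF x a
    simp [Ch, this]
  rw [hgeo]
  exact ⟨_, hT.homotopyEquiv hK⟩
end

section
/- For n ≥ 1, realize Δ^n as the convex hull of the standard basis vectors e_1,…,e_{n+1} of ℝ^{n+1}. The Gauss map (x, y) ↦ x − y is a homeomorphism from D_2(Δ^n) onto the boundary S of the polytope in ℝ^{n+1} with vertex set {e_i − e_j : i, j ∈ [n+1], i ≠ j}; in particular D_2(Δ^n) is homeomorphic to the sphere S^{n−1}. -/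
/-!
The polytope with vertices `e_i - e_j` is `{v | ∑ v_i = 0, ∑ |v_i| ≤ 2}`: adjoining `0` (a midpoint
of opposite vertices) to the vertex set gives the difference set of the standard basis with itself,
so the polytope is the difference `Δ - Δ` of the standard simplex with itself, and a vector `v` of
sum zero and `ℓ¹`-norm at most `2` lies in it because its positive and negative parts have the same
sum `≤ 1` and can be completed to points of `Δ` by adding the same vector.  Consequently the
intrinsic frontier is `{v | ∑ v_i = 0, ∑ |v_i| = 2}` (`intrinsicFrontier_rootHull`).  On this set the
Gauss map has the continuous inverse `v ↦ (v⁺, v⁻)`: points of the simplex with disjoint supports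
are exactly the positive and negative parts of their difference.  Finally, radial projection
identifies this sphere of the `ℓ¹`-norm in the `n`-dimensional space `{∑ v_i = 0}` with the
Euclidean unit sphere.
-/

open scoped BigOperators

/-- The discretized configuration space of `k` points on the simplex with `N` vertices
(i.e. `D_k(Δ^(N-1))`), realized geometrically: tuples of points of the standard simplex
whose supports (the vertex sets of the open cells containing them, equivalently the
vertex sets of the closures of those cells) are pairwise disjoint. -/
def DConf (k N : ℕ) : Set (Fin k → Fin N → ℝ) :=
  {x | (∀ i, x i ∈ stdSimplex ℝ (Fin N)) ∧
    ∀ i j : Fin k, i ≠ j → Disjoint (Function.support (x i)) (Function.support (x j))}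

open Set Filter Topology
open scoped Pointwise

/-- The set of vectors with sum zero and `ℓ¹`-norm `2`, which is the boundary of the polytope with
vertices `e_i - e_j`. -/
def l1Sphere (N : ℕ) : Set (Fin N → ℝ) :=
  {v | ∑ i, v i = 0 ∧ ∑ i, |v i| = 2}

/-- The vertex set `{e_i - e_j : i ≠ j}`. -/
def rootSet (N : ℕ) : Set (Fin N → ℝ) :=
  {v | ∃ i j : Fin N, i ≠ j ∧ v = Pi.single i 1 - Pi.single j 1}

lemma sum_posPart_add_negPart {N : ℕ} (v : Fin N → ℝ) :
    ∑ i, max (v i) 0 + ∑ i, max (-v i) 0 = ∑ i, |v i| := by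
  rw [← Finset.sum_add_distrib]
  refine Finset.sum_congr rfl fun i _ => ?_
  rcases le_total 0 (v i) with h | h
  · rw [max_eq_left h, max_eq_right (by linarith), abs_of_nonneg h, add_zero]
  · rw [max_eq_right h, max_eq_left (by linarith), abs_of_nonpos h, zero_add]

lemma sum_posPart_sub_negPart {N : ℕ} (v : Fin N → ℝ) :
    ∑ i, max (v i) 0 - ∑ i, max (-v i) 0 = ∑ i, v i := by
  rw [← Finset.sum_sub_distrib]
  refine Finset.sum_congr rfl fun i _ => ?_
  rcases le_total 0 (v i) with h | h
  · rw [max_eq_left h, max_eq_right (by linarith), sub_zero]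
  · rw [max_eq_right h, max_eq_left (by linarith)]; ring

lemma zero_mem_rootHull {n : ℕ} (hn : 1 ≤ n) :
    (0 : Fin (n + 1) → ℝ) ∈ convexHull ℝ (rootSet (n + 1)) := by
  have h01 : (0 : Fin (n + 1)) ≠ Fin.last n := by
    intro h
    have := congrArg Fin.val h
    simp at this
    omega
  have h1 := subset_convexHull ℝ (rootSet (n + 1)) ⟨_, _, h01, rfl⟩
  have h2 := subset_convexHull ℝ (rootSet (n + 1)) ⟨_, _, h01.symm, rfl⟩
  have := (convex_convexHull ℝ (rootSet (n + 1))) h1 h2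
    (by norm_num : (0 : ℝ) ≤ 1 / 2) (by norm_num : (0 : ℝ) ≤ 1 / 2) (by norm_num)
  convert this using 1
  module

/-- The polytope is the difference of the standard simplex with itself. -/
lemma rootHull_eq_sub {n : ℕ} (hn : 1 ≤ n) :
    convexHull ℝ (rootSet (n + 1)) =
      stdSimplex ℝ (Fin (n + 1)) - stdSimplex ℝ (Fin (n + 1)) := by
  rw [← convexHull_basis_eq_stdSimplex, ← convexHull_sub]
  apply Subset.antisymm
  · apply convexHull_mono
    rintro v ⟨i, j, -, rfl⟩
    refine Set.sub_mem_sub ⟨i, ?_⟩ ⟨j, ?_⟩ <;>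
    · ext k
      simp [Pi.single_apply, eq_comm]
  · apply convexHull_min _ (convex_convexHull ℝ _)
    rintro v ⟨_, ⟨i, rfl⟩, _, ⟨j, rfl⟩, rfl⟩
    by_cases hij : i = j
    · subst hij
      simpa using zero_mem_rootHull hn
    · apply subset_convexHull
      refine ⟨i, j, hij, ?_⟩
      ext k
      simp [Pi.single_apply, eq_comm]

lemma rootHull_eq {n : ℕ} (hn : 1 ≤ n) :
    convexHull ℝ (rootSet (n + 1)) = {v | ∑ i, v i = 0 ∧ ∑ i, |v i| ≤ 2} := by
  rw [rootHull_eq_sub hn]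
  apply Subset.antisymm
  · rintro v ⟨x, ⟨hx0, hx1⟩, y, ⟨hy0, hy1⟩, rfl⟩
    refine ⟨by simp [hx1, hy1], ?_⟩
    calc ∑ i, |(x - y) i| ≤ ∑ i, (x i + y i) := by
          refine Finset.sum_le_sum fun i _ => ?_
          have := hx0 i
          have := hy0 i
          rw [Pi.sub_apply, abs_le]
          constructor <;> linarith
      _ = 2 := by rw [Finset.sum_add_distrib, hx1, hy1]; norm_num
  · rintro v ⟨h0, h2⟩
    have ha := sum_posPart_add_negPart v
    have hs := sum_posPart_sub_negPart v
    -- The mass missing from both parts is put on the vertex `0`.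
    set s := ∑ i, max (v i) 0 with hsdef
    have hs1 : 0 ≤ 1 - s := by linarith
    have hsingle : ∀ i, 0 ≤ (Pi.single 0 (1 - s) : Fin (n + 1) → ℝ) i := by
      intro i
      rw [Pi.single_apply]
      split_ifs <;> simp [hs1]
    refine ⟨fun i => max (v i) 0 + (Pi.single 0 (1 - s) : Fin (n + 1) → ℝ) i, ⟨fun i => ?_, ?_⟩,
      fun i => max (-v i) 0 + (Pi.single 0 (1 - s) : Fin (n + 1) → ℝ) i, ⟨fun i => ?_, ?_⟩, ?_⟩
    · exact add_nonneg (le_max_right _ _) (hsingle i)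
    · rw [Finset.sum_add_distrib, Finset.sum_pi_single', ← hsdef]
      simp
    · exact add_nonneg (le_max_right _ _) (hsingle i)
    · rw [Finset.sum_add_distrib, Finset.sum_pi_single']
      simp
      linarith
    · ext i
      simp only [Pi.sub_apply, add_sub_add_right_eq_sub]
      rcases le_total 0 (v i) with h | h
      · rw [max_eq_left h, max_eq_right (by linarith), sub_zero]
      · rw [max_eq_right h, max_eq_left (by linarith)]; ring

lemma continuous_l1 {N : ℕ} : Continuous fun v : Fin N → ℝ => ∑ i, |v i| := by fun_prop

lemma continuous_coordSum {N : ℕ} : Continuous fun v : Fin N → ℝ => ∑ i, v i := by fun_prop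

lemma sum_eq_zero_of_mem_affineSpan {n : ℕ} (hn : 1 ≤ n) {v : Fin (n + 1) → ℝ}
    (hv : v ∈ affineSpan ℝ (convexHull ℝ (rootSet (n + 1)))) : ∑ i, v i = 0 := by
  have hle : affineSpan ℝ (convexHull ℝ (rootSet (n + 1))) ≤
      (LinearMap.ker (∑ i, LinearMap.proj i : (Fin (n + 1) → ℝ) →ₗ[ℝ] ℝ)).toAffineSubspace := by
    rw [affineSpan_le, rootHull_eq hn]
    rintro w ⟨hw, -⟩
    simpa using hw
  simpa using hle hv

/-- The interior within the affine span is cut out by the strict inequality: it is open, and a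
vector of norm `2` is a limit of its multiples by factors `t > 1`, which leave the polytope. -/
lemma intrinsicFrontier_rootHull {n : ℕ} (hn : 1 ≤ n) :
    intrinsicFrontier ℝ (convexHull ℝ (rootSet (n + 1))) = l1Sphere (n + 1) := by
  have hmem : ∀ v, v ∈ convexHull ℝ (rootSet (n + 1)) ↔ ∑ i, v i = 0 ∧ ∑ i, |v i| ≤ 2 := by
    intro v
    rw [rootHull_eq hn]
    rfl
  have hclosed : IsClosed (convexHull ℝ (rootSet (n + 1))) := by
    rw [rootHull_eq hn]
    exact (isClosed_eq continuous_coordSum continuous_const).inter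
      (isClosed_le continuous_l1 continuous_const)
  ext v
  rw [mem_intrinsicFrontier]
  constructor
  · rintro ⟨y, hy, rfl⟩
    rw [(hclosed.preimage continuous_subtype_val).frontier_eq] at hy
    obtain ⟨hyP, hyi⟩ := hy
    obtain ⟨h0, h2⟩ := (hmem _).1 hyP
    refine ⟨h0, le_antisymm h2 (not_lt.1 fun hlt => hyi ?_)⟩
    refine mem_interior.2 ⟨{z | ∑ i, |(z : Fin (n + 1) → ℝ) i| < 2}, fun z hz => ?_,
      isOpen_lt (continuous_l1.comp continuous_subtype_val) continuous_const, hlt⟩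
    exact (hmem _).2 ⟨sum_eq_zero_of_mem_affineSpan hn z.2, le_of_lt hz⟩
  · rintro ⟨h0, h2⟩
    have hvP : v ∈ convexHull ℝ (rootSet (n + 1)) := (hmem v).2 ⟨h0, h2.le⟩
    have hvA := subset_affineSpan ℝ _ hvP
    have h0A := subset_affineSpan ℝ _ (zero_mem_rootHull hn)
    refine ⟨⟨v, hvA⟩, ?_, rfl⟩
    rw [(hclosed.preimage continuous_subtype_val).frontier_eq]
    refine ⟨hvP, fun hint => ?_⟩
    have hline : ∀ t : ℝ, t • v ∈ affineSpan ℝ (convexHull ℝ (rootSet (n + 1))) := by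
      intro t
      have := AffineMap.lineMap_mem t h0A hvA
      simpa [AffineMap.lineMap_apply] using this
    let f : ℝ → affineSpan ℝ (convexHull ℝ (rootSet (n + 1))) := fun t => ⟨t • v, hline t⟩
    have hf : Continuous f := by
      apply Continuous.subtype_mk
      fun_prop
    have hf1 : f 1 = ⟨v, hvA⟩ := Subtype.ext (one_smul ℝ v)
    rw [mem_interior_iff_mem_nhds, ← hf1] at hint
    have hev : ∀ᶠ t in 𝓝[>] (1 : ℝ), t • v ∈ convexHull ℝ (rootSet (n + 1)) :=
      (hf.continuousAt.eventually hint).filter_mono nhdsWithin_le_nhds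
    obtain ⟨t, ht, ht1⟩ := (hev.and self_mem_nhdsWithin).exists
    have ht1 : 1 < t := ht1
    have hle := ((hmem _).1 ht).2
    simp only [Pi.smul_apply, smul_eq_mul, abs_mul] at hle
    rw [← Finset.mul_sum, h2, abs_of_pos (by linarith)] at hle
    linarith

lemma DConf.eq_zero_or {N : ℕ} (x : DConf 2 N) (i : Fin N) : x.1 0 i = 0 ∨ x.1 1 i = 0 := by
  by_contra! h
  exact Set.disjoint_left.1 (x.2.2 0 1 (by decide)) h.1 h.2

/-- The Gauss map, with inverse `v ↦ (v⁺, v⁻)`. -/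
noncomputable def gaussHomeo (N : ℕ) : DConf 2 N ≃ₜ l1Sphere N where
  toFun x := ⟨x.1 0 - x.1 1, by
    obtain ⟨hx0, hx1⟩ := x.2.1 0
    obtain ⟨hy0, hy1⟩ := x.2.1 1
    refine ⟨by simp [hx1, hy1], ?_⟩
    have : ∀ i, |(x.1 0 - x.1 1) i| = x.1 0 i + x.1 1 i := by
      intro i
      rw [Pi.sub_apply]
      rcases DConf.eq_zero_or x i with h | h
      · rw [h, zero_sub, abs_neg, abs_of_nonneg (hy0 i), zero_add]
      · rw [h, sub_zero, abs_of_nonneg (hx0 i), add_zero]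
    rw [Finset.sum_congr rfl fun i _ => this i, Finset.sum_add_distrib, hx1, hy1]
    norm_num⟩
  invFun v := ⟨![fun i => max (v.1 i) 0, fun i => max (-v.1 i) 0], by
    have ha := sum_posPart_add_negPart v.1
    have hs := sum_posPart_sub_negPart v.1
    rw [v.2.2] at ha
    rw [v.2.1] at hs
    constructor
    · intro i
      fin_cases i
      · exact ⟨fun i => le_max_right _ _, by simp; linarith⟩
      · exact ⟨fun i => le_max_right _ _, by simp; linarith⟩
    · have hd : Disjoint (Function.support fun i => max (v.1 i) 0)
          (Function.support fun i => max (-v.1 i) 0) := by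
        refine Set.disjoint_left.2 fun i h1 h2 => ?_
        rcases le_total 0 (v.1 i) with h | h
        · exact h2 (max_eq_right (by linarith))
        · exact h1 (max_eq_right h)
      intro i j hij
      fin_cases i <;> fin_cases j
      · exact absurd rfl hij
      · exact hd
      · exact hd.symm
      · exact absurd rfl hij⟩
  left_inv x := by
    apply Subtype.ext
    funext k i
    have hx := (x.2.1 0).1 i
    have hy := (x.2.1 1).1 i
    fin_cases k
    · change max (x.1 0 i - x.1 1 i) 0 = x.1 0 i
      rcases DConf.eq_zero_or x i with h | h
      · rw [h]; exact max_eq_right (by linarith)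
      · rw [h, sub_zero]; exact max_eq_left hx
    · change max (-(x.1 0 i - x.1 1 i)) 0 = x.1 1 i
      rcases DConf.eq_zero_or x i with h | h
      · rw [h, zero_sub, neg_neg]; exact max_eq_left hy
      · rw [h]; exact max_eq_right (by linarith)
  right_inv v := by
    apply Subtype.ext
    funext i
    change max (v.1 i) 0 - max (-v.1 i) 0 = v.1 i
    rcases le_total 0 (v.1 i) with h | h
    · rw [max_eq_left h, max_eq_right (by linarith), sub_zero]
    · rw [max_eq_right h, max_eq_left (by linarith)]; ring
  continuous_toFun := by
    apply Continuous.subtype_mk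
    exact ((continuous_apply 0).comp continuous_subtype_val).sub
      ((continuous_apply 1).comp continuous_subtype_val)
  continuous_invFun := by
    apply Continuous.subtype_mk
    refine continuous_pi fun k => ?_
    fin_cases k
    · change Continuous fun v : l1Sphere N => fun i => max (v.1 i) 0
      exact continuous_pi fun i => ((continuous_apply i).comp continuous_subtype_val).max continuous_const
    · change Continuous fun v : l1Sphere N => fun i => max (-v.1 i) 0
      exact continuous_pi fun i => ((continuous_apply i).comp continuous_subtype_val).neg.max continuous_const

/-- The linear functional `v ↦ ∑ v_i`. -/
noncomputable def coordSum (N : ℕ) : (Fin N → ℝ) →ₗ[ℝ] ℝ := ∑ i, LinearMap.proj i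

lemma coordSum_apply {N : ℕ} (v : Fin N → ℝ) : coordSum N v = ∑ i, v i := by
  simp [coordSum]

lemma finrank_ker_coordSum (n : ℕ) : Module.finrank ℝ (LinearMap.ker (coordSum (n + 1))) = n := by
  have hne : coordSum (n + 1) ≠ 0 := by
    intro h
    have := LinearMap.congr_fun h (Pi.single 0 1)
    simp [coordSum_apply] at this
  have := Module.Dual.finrank_ker_add_one_of_ne_zero (f := coordSum (n + 1)) hne
  simpa using this

lemma l1_smul {N : ℕ} (t : ℝ) (v : Fin N → ℝ) : ∑ i, |(t • v) i| = |t| * ∑ i, |v i| := by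
  simp [abs_mul, Finset.mul_sum]

lemma l1_pos {N : ℕ} {v : Fin N → ℝ} (hv : v ≠ 0) : 0 < ∑ i, |v i| := by
  obtain ⟨i, hi⟩ := Function.ne_iff.1 hv
  exact Finset.sum_pos' (fun i _ => abs_nonneg _) ⟨i, Finset.mem_univ _, abs_pos.2 hi⟩

/-- Radial projection from the `ℓ¹`-sphere in `{∑ v_i = 0}` to the Euclidean sphere, along a linear
isomorphism `{∑ v_i = 0} ≃ ℝⁿ`. -/
noncomputable def l1SphereHomeo {n : ℕ}
    (e : LinearMap.ker (coordSum (n + 1)) ≃L[ℝ] EuclideanSpace ℝ (Fin n)) :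
    l1Sphere (n + 1) ≃ₜ Metric.sphere (0 : EuclideanSpace ℝ (Fin n)) 1 :=
  have hker : ∀ v : l1Sphere (n + 1), v.1 ∈ LinearMap.ker (coordSum (n + 1)) := fun v => by
    rw [LinearMap.mem_ker, coordSum_apply]
    exact v.2.1
  have hne : ∀ v : l1Sphere (n + 1), e ⟨v.1, hker v⟩ ≠ 0 := fun v h => by
    have h0 : v.1 = 0 := congrArg Subtype.val ((map_eq_zero_iff e e.injective).1 h)
    have := v.2.2
    simp [h0] at this
  have hne' : ∀ w : Metric.sphere (0 : EuclideanSpace ℝ (Fin n)) 1,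
      (e.symm w.1 : Fin (n + 1) → ℝ) ≠ 0 := fun w h => by
    have h0 : w.1 = 0 := (map_eq_zero_iff e.symm e.symm.injective).1 (Subtype.ext h)
    have := w.2
    simp [h0] at this
  { toFun := fun v => ⟨‖e ⟨v.1, hker v⟩‖⁻¹ • e ⟨v.1, hker v⟩, by
      rw [mem_sphere_zero_iff_norm, norm_smul, norm_inv, norm_norm,
        inv_mul_cancel₀ (norm_ne_zero_iff.2 (hne v))]⟩
    invFun := fun w => ⟨(2 / ∑ i, |(e.symm w.1 : Fin (n + 1) → ℝ) i|) •
        (e.symm w.1 : Fin (n + 1) → ℝ), by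
      have hpos := l1_pos (hne' w)
      constructor
      · rw [← coordSum_apply, map_smul, LinearMap.mem_ker.1 (e.symm w.1).2, smul_zero]
      · rw [l1_smul, abs_of_pos (by positivity)]
        field_simp⟩
    left_inv := fun v => by
      apply Subtype.ext
      have hpos : 0 < ‖e ⟨v.1, hker v⟩‖ := norm_pos_iff.2 (hne v)
      have hs : (e.symm (‖e ⟨v.1, hker v⟩‖⁻¹ • e ⟨v.1, hker v⟩) : Fin (n + 1) → ℝ) =
          ‖e ⟨v.1, hker v⟩‖⁻¹ • v.1 := by
        rw [map_smul, e.symm_apply_apply]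
        rfl
      simp only [hs, l1_smul, v.2.2, smul_smul]
      rw [abs_of_pos (by positivity)]
      convert one_smul ℝ v.1 using 2
      field_simp
    right_inv := fun w => by
      apply Subtype.ext
      have hpos := l1_pos (hne' w)
      have hw : ‖w.1‖ = 1 := mem_sphere_zero_iff_norm.1 w.2
      have hcpos : 0 < 2 / ∑ i, |(e.symm w.1 : Fin (n + 1) → ℝ) i| := by positivity
      have hs : ∀ (c : ℝ) (h), e ⟨c • (e.symm w.1 : Fin (n + 1) → ℝ), h⟩ = c • w.1 :=
        fun c h => by
          rw [← e.apply_symm_apply (c • w.1), map_smul]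
          rfl
      simp only [hs, norm_smul, hw, mul_one, Real.norm_eq_abs, abs_of_pos hcpos, smul_smul]
      rw [inv_mul_cancel₀ hcpos.ne', one_smul]
    continuous_toFun := by
      have h1 : Continuous fun v : l1Sphere (n + 1) => e ⟨v.1, hker v⟩ :=
        e.continuous.comp (continuous_subtype_val.subtype_mk _)
      exact ((h1.norm.inv₀ fun v => norm_ne_zero_iff.2 (hne v)).smul h1).subtype_mk _
    continuous_invFun := by
      have h1 : Continuous fun w : Metric.sphere (0 : EuclideanSpace ℝ (Fin n)) 1 =>
          (e.symm w.1 : Fin (n + 1) → ℝ) :=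
        continuous_subtype_val.comp (e.symm.continuous.comp continuous_subtype_val)
      exact ((continuous_const.div (continuous_l1.comp h1)
        fun w => (l1_pos (hne' w)).ne').smul h1).subtype_mk _ }

/-- The Gauss map `(x, y) ↦ x - y` is a homeomorphism from `D_2(Δ^n)` onto the boundary of
the polytope in `ℝ^{n+1}` with vertex set `{e_i - e_j : i ≠ j}` (the boundary being taken
intrinsically, i.e. within the hyperplane `{∑ x_i = 0}` containing the polytope); in
particular `D_2(Δ^n)` is homeomorphic to the sphere `S^{n-1}`. -/
theorem gaussMap_homeomorph (n : ℕ) (hn : 1 ≤ n) :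
    (∃ h : DConf 2 (n + 1) ≃ₜ
        (intrinsicFrontier ℝ (convexHull ℝ
          {v : Fin (n + 1) → ℝ |
            ∃ i j : Fin (n + 1), i ≠ j ∧ v = Pi.single i 1 - Pi.single j 1})),
      ∀ x : DConf 2 (n + 1), (h x : Fin (n + 1) → ℝ) = x.1 0 - x.1 1) ∧
    Nonempty (DConf 2 (n + 1) ≃ₜ Metric.sphere (0 : EuclideanSpace ℝ (Fin n)) 1) := by
  refine ⟨⟨(gaussHomeo (n + 1)).trans
    (Homeomorph.setCongr (intrinsicFrontier_rootHull hn).symm), fun x => rfl⟩, ?_⟩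
  have e : LinearMap.ker (coordSum (n + 1)) ≃L[ℝ] EuclideanSpace ℝ (Fin n) :=
    ContinuousLinearEquiv.ofFinrankEq (by rw [finrank_ker_coordSum, finrank_euclideanSpace_fin])
  exact ⟨(gaussHomeo (n + 1)).trans (l1SphereHomeo e)⟩
end
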